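/- arXiv:1909.11347 — 3 statements merged into one kernel-verified Lean document; each statement's English description precedes it below -/
import Mathlib

section
/- Let X be a connected topological space that is homotopy equivalent to some separable metric absolute neighborhood retract, let Y be a metric absolute neighborhood retract, and let f : X → Y be a compressive continuous surjection. Then f is a homotopy equivalence. -/
universe u v

/-- A topological space `X` is an absolute neighborhood retract (ANR) if whenever
it is embedded as a closed subset of a metric space `Z`, some open neighborhood of
the image retracts onto the image. -/
def IsANR (X : Type u) [TopologicalSpace X] : Prop :=
  ∀ (Z : Type u) [MetricSpace Z] (e : X → Z),
    Topology.IsEmbedding e → IsClosed (Set.range e) →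
      ∃ (U : Set Z) (r : Z → Z), IsOpen U ∧ Set.range e ⊆ U ∧
        ContinuousOn r U ∧ (∀ z ∈ U, r z ∈ Set.range e) ∧ ∀ z ∈ Set.range e, r z = z

/-- `(V', V)` is a compressive pair for `f`: both sets are open, `V' ⊆ V`, and
`f⁻¹(V')` is contractible in `f⁻¹(V)`. -/
def IsCompressivePair {X Y : Type*} [TopologicalSpace X] [TopologicalSpace Y]
    (f : X → Y) (V' V : Set Y) : Prop :=
  IsOpen V' ∧ IsOpen V ∧ V' ⊆ V ∧
    ∃ ξ : (f ⁻¹' V') × unitInterval → (f ⁻¹' V),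
      Continuous ξ ∧
      (∀ x : f ⁻¹' V', ((ξ (x, 0) : X) = (x : X))) ∧
      ∃ c : f ⁻¹' V, ∀ x : f ⁻¹' V', ξ (x, 1) = c

/-- `f` is compressive: for every `y ∈ Y` and every open neighborhood `V` of `y`
there is an open neighborhood `V'` of `y` such that `(V', V)` is a compressive
pair for `f`. -/
def IsCompressive {X Y : Type*} [TopologicalSpace X] [TopologicalSpace Y]
    (f : X → Y) : Prop :=
  ∀ (y : Y) (V : Set Y), IsOpen V → y ∈ V →
    ∃ V' : Set Y, y ∈ V' ∧ IsCompressivePair f V' V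

section Aux

open Set Filter Topology

lemma aux_embed (Y : Type u) [MetricSpace Y] :
    ∃ (F : Type u) (_ : NormedAddCommGroup F) (_ : NormedSpace ℝ F) (e : Y → F),
      (∀ y z, ‖e y - e z‖ ≤ dist y z) ∧ IsEmbedding e ∧ IsClosed (range e) := by
  classical
  let _ : TopologicalSpace (Finset Y) := ⊥
  have _ : DiscreteTopology (Finset Y) := ⟨rfl⟩
  let v : Y → Finset Y → ℝ := fun y S =>
    if S = ∅ then 1 else min 1 (Metric.infDist y (S : Set Y))
  have hv0 : ∀ y S, 0 ≤ v y S := by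
    intro y S; simp only [v]; split_ifs
    · norm_num
    · exact le_min zero_le_one Metric.infDist_nonneg
  have hv1 : ∀ y S, v y S ≤ 1 := by
    intro y S; simp only [v]; split_ifs
    · norm_num
    · exact min_le_left _ _
  have hvb : ∀ y S, ‖v y S‖ ≤ 1 := fun y S => by
    rw [Real.norm_eq_abs, abs_of_nonneg (hv0 y S)]; exact hv1 y S
  let e0 : Y → BoundedContinuousFunction (Finset Y) ℝ := fun y =>
    BoundedContinuousFunction.ofNormedAddCommGroupDiscrete (v y) 1 (hvb y)
  have he0 : ∀ y S, e0 y S = v y S := fun y S => rfl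
  let F := Submodule.span ℝ (range e0)
  let e : Y → F := fun y => ⟨e0 y, Submodule.subset_span (mem_range_self y)⟩
  have hnorm : ∀ (y : Y) (z : F), ‖e y - z‖ = ‖e0 y - z.1‖ := fun y z => rfl
  have hdist : ∀ a b : F, dist a b = ‖a - b‖ := fun a b => dist_eq_norm a b
  have hlip : ∀ y z, ‖e y - e z‖ ≤ dist y z := by
    intro y z
    rw [hnorm]
    refine (BoundedContinuousFunction.norm_le dist_nonneg).2 fun S => ?_
    show ‖v y S - v z S‖ ≤ _
    simp only [v]
    split_ifs
    · simp
    · rw [Real.norm_eq_abs]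
      refine (abs_min_sub_min_le_max _ _ _ _).trans ?_
      simp only [sub_self, abs_zero]
      refine max_le dist_nonneg ?_
      have h1 := Metric.infDist_le_infDist_add_dist (s := (S : Set Y)) (x := y) (y := z)
      have h2 := Metric.infDist_le_infDist_add_dist (s := (S : Set Y)) (x := z) (y := y)
      rw [dist_comm z y] at h2
      rw [abs_le]; constructor <;> linarith
  have hlow : ∀ y z, min 1 (dist y z) ≤ ‖e y - e z‖ := by
    intro y z
    rw [hnorm]
    have := BoundedContinuousFunction.norm_coe_le_norm (e0 y - e0 z) {z}
    refine le_trans ?_ this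
    show _ ≤ ‖v y {z} - v z {z}‖
    simp only [v]
    simp
    exact min_le_iff.1 (le_abs_self _)
  refine ⟨F, inferInstance, inferInstance, e, hlip, ?_, ?_⟩
  · refine IsUniformEmbedding.isEmbedding ⟨?_, ?_⟩
    · rw [Metric.isUniformInducing_iff]
      constructor
      · exact LipschitzWith.uniformContinuous (K := 1)
          (LipschitzWith.of_dist_le_mul fun y z => by
            rw [hdist, NNReal.coe_one, one_mul]; exact hlip y z)
      · intro δ hδ
        refine ⟨min 1 δ, by positivity, fun {a b} h => ?_⟩
        rw [hdist] at h
        have := (hlow a b).trans_lt h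
        by_contra hc
        push Not at hc
        exact absurd this (not_lt.2 (min_le_min_left _ hc))
    · intro a b hab
      have := hlow a b
      have h0 := hlip b b
      rw [dist_self] at h0
      rw [hab] at this
      by_contra hne
      have h2 : 0 < dist a b := dist_pos.2 hne
      have : 0 < min 1 (dist a b) := lt_min one_pos h2
      linarith
  · refine isClosed_of_closure_subset fun z hz => ?_
    by_contra hzr
    obtain ⟨c, hc⟩ := Finsupp.mem_span_range_iff_exists_finsupp.1 z.2
    have hz0 : z.1 c.support = 0 := by
      rw [← hc, Finsupp.sum, BoundedContinuousFunction.sum_apply]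
      refine Finset.sum_eq_zero fun i hi => ?_
      have : v i c.support = 0 := by
        have hne : c.support ≠ ∅ := Finset.ne_empty_of_mem hi
        simp only [v, if_neg hne]
        rw [Metric.infDist_zero_of_mem (by exact_mod_cast hi)]; simp
      simp [he0, this]
    have hε : ∃ ε > 0, ∀ i ∈ c.support, ε ≤ ‖e i - z‖ := by
      rcases c.support.eq_empty_or_nonempty with h | h
      · exact ⟨1, one_pos, by simp [h]⟩
      · obtain ⟨i, hi, hm⟩ := Finset.exists_min_image c.support (fun i => ‖e i - z‖) h
        refine ⟨‖e i - z‖, norm_pos_iff.2 (sub_ne_zero.2 fun h => hzr ⟨i, h⟩), hm⟩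
    obtain ⟨ε, hε, hεi⟩ := hε
    obtain ⟨_, ⟨y, rfl⟩, hy⟩ := Metric.mem_closure_iff.1 hz (min (1/2) (ε/2)) (by positivity)
    rw [dist_comm, hdist] at hy
    have h1 : v y c.support < min (1/2) (ε/2) := by
      refine lt_of_le_of_lt ?_ hy
      have := BoundedContinuousFunction.norm_coe_le_norm (e0 y - z.1) c.support
      rw [hnorm]
      refine le_trans ?_ this
      rw [BoundedContinuousFunction.sub_apply, hz0, sub_zero, he0]
      exact le_abs_self _
    have h2 : v y c.support < 1/2 := h1.trans_le (min_le_left _ _)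
    have h3 : v y c.support < ε/2 := h1.trans_le (min_le_right _ _)
    by_cases hS : c.support = ∅
    · simp only [v, if_pos hS] at h2; norm_num at h2
    · simp only [v, if_neg hS] at h2 h3
      have h4 : Metric.infDist y (c.support : Set Y) < ε / 2 := by
        rcases min_lt_iff.1 h3 with h | h
        · rcases min_lt_iff.1 h2 with h' | h'
          · norm_num at h'
          · rcases le_total (1:ℝ) (Metric.infDist y (c.support : Set Y)) with h6 | h6
            · linarith
            · linarith
        · exact h
      obtain ⟨i, hi, hd⟩ := (Metric.infDist_lt_iff
        (by exact_mod_cast Finset.nonempty_iff_ne_empty.2 hS)).1 h4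
      have h5 := hεi i (by exact_mod_cast hi)
      have h6 : ‖e i - z‖ ≤ ‖e i - e y‖ + ‖e y - z‖ := by
        have := dist_triangle (e i) (e y) z
        rwa [hdist, hdist, hdist] at this
      have h7 := hlip i y
      rw [dist_comm] at h7
      have h8 := hy.trans_le (min_le_right _ _)
      linarith

lemma anr_embed {Y : Type u} [MetricSpace Y] [Nonempty Y] (hY : IsANR Y) :
    ∃ (F : Type u) (_ : NormedAddCommGroup F) (_ : NormedSpace ℝ F) (e : Y → F)
      (U : Set F) (r : F → Y),
      (∀ y z, ‖e y - e z‖ ≤ dist y z) ∧ Continuous e ∧ IsOpen U ∧ (∀ y, e y ∈ U) ∧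
      ContinuousOn r U ∧ ∀ y, r (e y) = y := by
  obtain ⟨F, i1, i2, e, hl, he, hc⟩ := aux_embed Y
  obtain ⟨U, r, hU, hr, hrc, hrm, hri⟩ := hY F e he hc
  refine ⟨F, i1, i2, e, U, fun z => Function.invFun e (r z), hl, he.continuous, hU,
    fun y => hr (mem_range_self y), ?_, fun y => ?_⟩
  · rw [he.continuousOn_iff]
    refine hrc.congr fun z hz => ?_
    exact Function.invFun_eq (hrm z hz)
  · show Function.invFun e (r (e y)) = y
    rw [hri _ (mem_range_self y)]
    exact Function.leftInverse_invFun he.injective y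


lemma compress_unif {X : Type u} {Y : Type v} [TopologicalSpace X] [Nonempty X] [PseudoMetricSpace Y]
    {f : X → Y} (hfc : Continuous f)
    (hcomp : IsCompressive f) {K : Set Y} (hK : IsCompact K) {δ : ℝ} (hδ : 0 < δ) :
    ∃ δ' > 0, ∀ y ∈ K, ∃ (O : Set X) (ξ : X × ℝ → X) (c : X), IsOpen O ∧
      (∀ x, dist (f x) y < δ' → x ∈ O) ∧ ContinuousOn ξ (O ×ˢ univ) ∧
      (∀ x ∈ O, ξ (x, 0) = x) ∧ (∀ x ∈ O, ξ (x, 1) = c) ∧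
      (∀ x ∈ O, ∀ t, dist (f (ξ (x, t))) y < δ) ∧ dist (f c) y < δ := by
  classical
  have h1 : ∀ y : Y, ∃ V' : Set Y, y ∈ V' ∧ IsCompressivePair f V' (Metric.ball y (δ/2)) :=
    fun y => hcomp y _ Metric.isOpen_ball (Metric.mem_ball_self (by positivity))
  choose V' hyV hV using h1
  obtain ⟨δ', hδ', hL⟩ := lebesgue_number_lemma_of_metric (c := V') hK (fun y => (hV y).1)
    (fun y _ => mem_iUnion.2 ⟨y, hyV y⟩)
  refine ⟨δ', hδ', fun y hy => ?_⟩
  obtain ⟨y', hy'⟩ := hL y hy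
  obtain ⟨ho, -, hsub, ξ, hξc, hξ0, c, hξ1⟩ := hV y'
  have hyy : dist y y' < δ / 2 := hsub (hy' (Metric.mem_ball_self hδ'))
  have hnear : ∀ z : f ⁻¹' (Metric.ball y' (δ/2)), dist (f z) y < δ := by
    intro z
    have h1 : dist (f z) y' < δ/2 := z.2
    have := dist_triangle_right (f z) y y'
    linarith
  refine ⟨f ⁻¹' (V' y'), fun p => if h : p.1 ∈ f ⁻¹' (V' y') then
    (ξ (⟨p.1, h⟩, projIcc 0 1 zero_le_one p.2) : X) else p.1, c, ho.preimage hfc,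
    fun x hx => hy' hx, ?_, ?_, ?_, ?_, hnear c⟩
  · rw [continuousOn_iff_continuous_domRestrict]
    have : Continuous fun p : ((f ⁻¹' (V' y')) ×ˢ (univ : Set ℝ) : Set (X × ℝ)) =>
        (ξ (⟨p.1.1, p.2.1⟩, projIcc 0 1 zero_le_one p.1.2) : X) := by
      refine continuous_subtype_val.comp (hξc.comp ?_)
      refine Continuous.prodMk ?_ ?_
      · exact Continuous.subtype_mk (continuous_fst.comp continuous_subtype_val) _
      · exact continuous_projIcc.comp (continuous_snd.comp continuous_subtype_val)
    convert this using 1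
    ext p
    simp only [domRestrict_apply]
    rw [dif_pos p.2.1]
  · intro x hx
    simp only [dif_pos hx]
    rw [projIcc_left]
    exact hξ0 _
  · intro x hx
    simp only [dif_pos hx]
    rw [projIcc_right]
    exact congrArg _ (hξ1 _)
  · intro x hx t
    simp only [dif_pos hx]
    exact hnear _

lemma glue_step {D X Y : Type*} [TopologicalSpace D] [TopologicalSpace X] [Nonempty X] [PseudoMetricSpace Y]
    {f : X → Y} (hfc : Continuous f)
    (hcomp : IsCompressive f) {φ : D → Y} (hK : IsCompact (range φ)) {δ : ℝ} (hδ : 0 < δ) :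
    ∃ η > 0, ∀ (J : Type) (ν β : D → ℝ) (lab : D → J) (g : D → X), Continuous ν → Continuous β →
      (∀ w, 0 < β w → ∀ᶠ w' in 𝓝 w, lab w' = lab w) →
      (∀ w w', 0 < β w → 0 < β w' → lab w = lab w' → dist (φ w) (φ w') < η) →
      (∀ w, 0 < ν w → ContinuousAt g w ∧ dist (f (g w)) (φ w) < η) →
      ∃ g' : D → X, (∀ w, 1/2 < max (ν w) (β w) →
          ContinuousAt g' w ∧ dist (f (g' w)) (φ w) < δ) ∧
        ∀ w, β w ≤ 0 → g' w = g w := by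
  classical
  obtain ⟨δ', hδ', H⟩ := compress_unif hfc hcomp hK (half_pos hδ)
  choose! O ξ c hO hOn hξc hξ0 hξ1 hξd hcd using H
  refine ⟨min (δ'/2) (δ/2), by positivity, fun J ν β lab g hν hβ hlab hmesh hg => ?_⟩
  -- representatives
  let y : D → Y := fun w => if h : ∃ w', 0 < β w' ∧ lab w' = lab w then φ h.choose else φ w
  have hyK : ∀ w, y w ∈ range φ := by
    intro w; simp only [y]; split_ifs <;> exact mem_range_self _
  have hyl : ∀ w w', lab w' = lab w → 0 < β w → y w' = y w := by
    intro w w' h hb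
    have h1 : ∃ w'', 0 < β w'' ∧ lab w'' = lab w := ⟨w, hb, rfl⟩
    have h2 : ∃ w'', 0 < β w'' ∧ lab w'' = lab w' := ⟨w, hb, h.symm⟩
    simp only [y, dif_pos h1, dif_pos h2]
    congr 2
    simp only [h]
  have hyd : ∀ w, 0 < β w → dist (φ w) (y w) < min (δ'/2) (δ/2) := by
    intro w hb
    have h1 : ∃ w'', 0 < β w'' ∧ lab w'' = lab w := ⟨w, hb, rfl⟩
    simp only [y, dif_pos h1]
    exact hmesh _ _ hb h1.choose_spec.1 h1.choose_spec.2.symm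
  have hgO : ∀ w, 0 < β w → 0 < ν w → g w ∈ O (y w) := by
    intro w hb hn
    refine hOn _ (hyK w) _ ?_
    have h1 := (hg w hn).2.trans_le (min_le_left _ _)
    have h2 := (hyd w hb).trans_le (min_le_left _ _)
    have := dist_triangle (f (g w)) (φ w) (y w)
    linarith
  let α : D → ℝ := fun w => max 0 (min 1 (4 * β w - 1))
  have hα : Continuous α := by fun_prop
  have hα1 : ∀ w, 1/2 ≤ β w → α w = 1 := by
    intro w h; simp only [α]
    rw [min_eq_left (by linarith), max_eq_right (by norm_num)]
  let g' : D → X := fun w => if β w ≤ 1/4 then g w else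
    if 0 < ν w then ξ (y w) (g w, α w) else c (y w)
  refine ⟨g', fun w hw => ?_, fun w hw => ?_⟩
  swap
  · simp only [g']; rw [if_pos (by linarith)]
  constructor
  · rcases lt_or_ge (β w) (1/4) with h | h
    · have hn : 0 < ν w := by
        rcases lt_max_iff.1 hw with h' | h' <;> linarith
      refine (hg w hn).1.congr ?_
      filter_upwards [(hβ.tendsto w).eventually (gt_mem_nhds h)] with w' hw'
      simp only [g']; rw [if_pos hw'.le]
    · have hb : 0 < β w := by linarith
      have hbe := (hβ.tendsto w).eventually (lt_mem_nhds hb)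
      rcases lt_or_ge (1/2) (β w) with h2 | h2
      · refine (continuousAt_const (y := c (y w))).congr ?_
        filter_upwards [(hβ.tendsto w).eventually (lt_mem_nhds h2), hlab w hb] with w' hw' hl
        simp only [g']
        rw [if_neg (by linarith), hyl _ _ hl hb, hα1 _ hw'.le]
        split_ifs with h5
        · have h6 := hgO w' (by linarith) h5
          rw [hyl _ _ hl hb] at h6
          rw [hξ1 _ (hyK w) _ h6]
        · rfl
      · have hn : 0 < ν w := by
          rcases lt_max_iff.1 hw with h' | h' <;> linarith
        have hcont : ContinuousAt (fun w' => ξ (y w) (g w', α w')) w := by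
          refine ContinuousAt.comp (f := fun w' => (g w', α w')) (g := ξ (y w)) ?_ ?_
          · refine (hξc _ (hyK w)).continuousAt ?_
            exact ((hO _ (hyK w)).prod isOpen_univ).mem_nhds ⟨hgO w hb hn, mem_univ _⟩
          · exact (hg w hn).1.prodMk hα.continuousAt
        refine hcont.congr ?_
        filter_upwards [hlab w hb, (hν.tendsto w).eventually (lt_mem_nhds hn), hbe] with w' hl hn' hb'
        simp only [g']
        rw [hyl _ _ hl hb, if_pos hn']
        split_ifs with h5
        · have h6 := hgO w' hb' hn'
          rw [hyl _ _ hl hb] at h6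
          have : α w' = 0 := by
            simp only [α]; rw [max_eq_left]; exact (min_le_right _ _).trans (by linarith)
          rw [this, hξ0 _ (hyK w) _ h6]
        · rfl
  · simp only [g']
    split_ifs with h1 h2
    · have hn : 0 < ν w := by
        rcases lt_max_iff.1 hw with h' | h' <;> linarith
      have := (hg w hn).2.trans_le (min_le_right _ _)
      linarith
    · have hb : 0 < β w := by linarith
      have h3 := hξd _ (hyK w) _ (hgO w hb h2) (α w)
      have h4 := (hyd w hb).trans_le (min_le_right _ _)
      have := dist_triangle_right (f (ξ (y w) (g w, α w))) (φ w) (y w)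
      linarith
    · have hb : 0 < β w := by linarith
      have h3 := hcd _ (hyK w)
      have h4 := (hyd w hb).trans_le (min_le_right _ _)
      have := dist_triangle_right (f (c (y w))) (φ w) (y w)
      linarith

lemma glue_iter {D X Y : Type*} [TopologicalSpace D] [TopologicalSpace X] [Nonempty X] [PseudoMetricSpace Y]
    {f : X → Y} (hfc : Continuous f)
    (hcomp : IsCompressive f) {φ : D → Y} (hK : IsCompact (range φ)) (m : ℕ) :
    ∀ {δ : ℝ}, 0 < δ →
    ∃ η > 0, ∀ (J : Type) (ν : D → ℝ) (β : ℕ → D → ℝ) (lab : ℕ → D → J) (g : D → X),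
      Continuous ν → (∀ i < m, Continuous (β i)) →
      (∀ i < m, ∀ w, 0 < β i w → ∀ᶠ w' in 𝓝 w, lab i w' = lab i w) →
      (∀ i < m, ∀ w w', 0 < β i w → 0 < β i w' → lab i w = lab i w' → dist (φ w) (φ w') < η) →
      (∀ w, 0 < ν w → ContinuousAt g w ∧ dist (f (g w)) (φ w) < η) →
      ∃ (g' : D → X) (ν' : D → ℝ), Continuous ν' ∧ (∀ w, 0 < ν' w →
          ContinuousAt g' w ∧ dist (f (g' w)) (φ w) < δ) ∧
        (∀ w, (1 ≤ ν w ∨ ∃ i < m, 1 ≤ β i w) → 1 ≤ ν' w) ∧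
        ∀ w, (∀ i < m, β i w ≤ 0) → g' w = g w := by
  induction m with
  | zero =>
    intro δ hδ
    refine ⟨δ, hδ, fun J ν β lab g hν _ _ _ hg => ⟨g, ν, hν, hg, fun w hw => ?_, fun _ _ => rfl⟩⟩
    rcases hw with h | ⟨i, hi, _⟩
    · exact h
    · exact absurd hi (Nat.not_lt_zero i)
  | succ m ih =>
    intro δ hδ
    obtain ⟨η1, h1, H1⟩ := glue_step hfc hcomp hK hδ
    obtain ⟨η2, h2, H2⟩ := ih h1
    refine ⟨min η1 η2, lt_min h1 h2, fun J ν β lab g hν hβ hlab hmesh hg => ?_⟩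
    obtain ⟨g1, ν1, hν1, hg1, hc1, he1⟩ := H2 J ν β lab g hν (fun i hi => hβ i (by omega))
      (fun i hi => hlab i (by omega))
      (fun i hi w w' a b c => (hmesh i (by omega) w w' a b c).trans_le (min_le_right _ _))
      (fun w hw => ⟨(hg w hw).1, (hg w hw).2.trans_le (min_le_right _ _)⟩)
    obtain ⟨g2, hg2, he2⟩ := H1 J ν1 (β m) (lab m) g1 hν1 (hβ m (by omega)) (hlab m (by omega))
      (fun w w' a b c => (hmesh m (by omega) w w' a b c).trans_le (min_le_left _ _)) hg1
    refine ⟨g2, fun w => 2 * max (ν1 w) (β m w) - 1, ?_, fun w hw => hg2 w (by linarith), ?_, ?_⟩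
    · have := hβ m (by omega); fun_prop
    · intro w hw
      have : 1 ≤ max (ν1 w) (β m w) := by
        rcases hw with h | ⟨i, hi, h⟩
        · exact le_max_of_le_left (hc1 w (Or.inl h))
        · rcases Nat.lt_succ_iff_lt_or_eq.1 hi with h3 | rfl
          · exact le_max_of_le_left (hc1 w (Or.inr ⟨i, h3, h⟩))
          · exact le_max_of_le_right h
      linarith
    · intro w hw
      rw [he2 w (hw m (by omega)), he1 w fun i hi => hw i (by omega)]


lemma exists_mesh {D Y κ : Type*} [TopologicalSpace D] [CompactSpace D] [PseudoMetricSpace Y]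
    [Fintype κ] (e : κ → D → ℝ) (he : ∀ i, Continuous (e i))
    (hinj : ∀ w w', (∀ i, e i w = e i w') → w = w') {φ : D → Y} (hφ : Continuous φ)
    {η : ℝ} (hη : 0 < η) :
    ∃ ε > 0, ∀ w w', (∀ i, |e i w - e i w'| < 2 * ε) → dist (φ w) (φ w') < η := by
  let T : Set (D × D) := {p | η ≤ dist (φ p.1) (φ p.2)}
  have hT : IsCompact T := (isClosed_le continuous_const (by fun_prop)).isCompact
  have hF : Continuous fun p : D × D => ∑ i, |e i p.1 - e i p.2| := by fun_prop
  obtain ⟨a, ha, hle⟩ := hT.exists_forall_le' hF.continuousOn (a := 0) (by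
    intro p hp
    by_contra hc
    push Not at hc
    have h0 := le_antisymm hc (Finset.sum_nonneg fun i _ => abs_nonneg _)
    rw [Finset.sum_eq_zero_iff_of_nonneg (fun i _ => abs_nonneg _)] at h0
    have : p.1 = p.2 := hinj _ _ fun i => sub_eq_zero.1 (abs_eq_zero.1 (h0 i (Finset.mem_univ i)))
    have hp' : η ≤ dist (φ p.1) (φ p.2) := hp
    rw [this, dist_self] at hp'
    linarith)
  have hk : (0:ℝ) < (Fintype.card κ : ℝ) + 1 := by positivity
  refine ⟨a / (2 * ((Fintype.card κ : ℝ) + 1)), by positivity, fun w w' h => ?_⟩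
  by_contra hc
  push Not at hc
  have h1 := hle (w, w') hc
  have h2 : ∑ i, |e i w - e i w'| ≤ ∑ _i : κ, (a / ((Fintype.card κ : ℝ) + 1)) := by
    refine Finset.sum_le_sum fun i _ => (h i).le.trans (le_of_eq ?_)
    field_simp
  rw [Finset.sum_const, nsmul_eq_mul, Finset.card_univ] at h2
  have h3 : (Fintype.card κ : ℝ) * (a / ((Fintype.card κ : ℝ) + 1)) < a := by
    rw [← mul_div_assoc, div_lt_iff₀ hk]; nlinarith
  simp only at h1
  linarith

lemma exists_colors {D Y κ : Type*} [TopologicalSpace D] [CompactSpace D] [PseudoMetricSpace Y]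
    [Fintype κ] (e : κ → D → ℝ) (he : ∀ i, Continuous (e i))
    (hinj : ∀ w w', (∀ i, e i w = e i w') → w = w') {φ : D → Y} (hφ : Continuous φ) :
    ∃ (m : ℕ), ∀ η > 0, ∃ (J : Type) (β : ℕ → D → ℝ) (lab : ℕ → D → J),
      (∀ i < m, Continuous (β i)) ∧
      (∀ i < m, ∀ w, 0 < β i w → ∀ᶠ w' in 𝓝 w, lab i w' = lab i w) ∧
      (∀ i < m, ∀ w w', 0 < β i w → 0 < β i w' → lab i w = lab i w' → dist (φ w) (φ w') < η) ∧
      (∀ i < m, ∀ w, 0 ≤ β i w) ∧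
      ∀ w, ∃ i < m, 1 ≤ β i w := by
  classical
  let n := Fintype.card κ
  let q : Fin n ≃ κ := (Fintype.equivFin κ).symm
  let m := Fintype.card (Fin n → Bool)
  let c : Fin m ≃ (Fin n → Bool) := (Fintype.equivFin _).symm
  refine ⟨m, fun η hη => ?_⟩
  obtain ⟨ε, hε, hmesh⟩ := exists_mesh e he hinj hφ hη
  let s : Bool → ℝ := fun b => if b then 1 else 0
  let tt : (Fin n → Bool) → Fin n → D → ℝ := fun b i w => e (q i) w / ε - s (b i)
  have htt : ∀ b i, Continuous (tt b i) := fun b i => by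
    have := he (q i); simp only [tt]; fun_prop
  let B : (Fin n → Bool) → D → ℝ := fun b w => ∏ i, min 1 (1 + Real.cos (Real.pi * tt b i w))
  have hBc : ∀ b, Continuous (B b) := fun b => by
    simp only [B]
    refine continuous_finsetProd _ fun i _ => ?_
    have := htt b i
    fun_prop
  have hnn : ∀ b i w, 0 ≤ min 1 (1 + Real.cos (Real.pi * tt b i w)) := fun b i w =>
    le_min zero_le_one (by linarith [Real.neg_one_le_cos (Real.pi * tt b i w)])
  let L : (Fin n → Bool) → D → (Fin n → ℤ) := fun b w i => ⌊(tt b i w + 1) / 2⌋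
  have hpos : ∀ b w, 0 < B b w → ∀ i, Real.cos (Real.pi * tt b i w) ≠ -1 := by
    intro b w h i hc
    have : B b w = 0 := Finset.prod_eq_zero (Finset.mem_univ i) (by rw [hc]; norm_num)
    linarith
  refine ⟨Fin n → ℤ, fun k => if h : k < m then B (c ⟨k, h⟩) else 0,
    fun k => if h : k < m then L (c ⟨k, h⟩) else 0, ?_, ?_, ?_, ?_, ?_⟩
  · intro k hk; simp only [dif_pos hk]; exact hBc _
  · intro k hk w; simp only [dif_pos hk]
    generalize c ⟨k, hk⟩ = b
    intro hb
    have : ∀ i, ∀ᶠ w' in 𝓝 w, L b w' i = L b w i := by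
      intro i
      have h1 := hpos b w hb i
      have hx : ∀ z : ℤ, (tt b i w + 1) / 2 ≠ z := by
        intro z hz
        apply h1
        have : Real.pi * tt b i w = (z : ℝ) * (2 * Real.pi) - Real.pi := by
          have : tt b i w = 2 * z - 1 := by linarith
          rw [this]; ring
        rw [this, Real.cos_sub_pi, Real.cos_int_mul_two_pi]
      have hlt : ((L b w i : ℤ) : ℝ) < (tt b i w + 1) / 2 :=
        lt_of_le_of_ne (Int.floor_le _) (hx _).symm
      have hlt2 : (tt b i w + 1) / 2 < (L b w i : ℝ) + 1 := Int.lt_floor_add_one _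
      have hcont : Continuous fun w' => (tt b i w' + 1) / 2 := by
        have := htt b i; fun_prop
      filter_upwards [(hcont.tendsto w).eventually (lt_mem_nhds hlt),
        (hcont.tendsto w).eventually (gt_mem_nhds hlt2)] with w' h3 h4
      exact Int.floor_eq_iff.2 ⟨h3.le, h4⟩
    filter_upwards [eventually_all.2 this] with w' hw'
    funext i; exact hw' i
  · intro k hk w w'; simp only [dif_pos hk]
    generalize c ⟨k, hk⟩ = b
    intro _ _ hl
    refine hmesh w w' fun j => ?_
    obtain ⟨i, rfl⟩ := q.surjective j
    have h1 : ⌊(tt b i w + 1) / 2⌋ = ⌊(tt b i w' + 1) / 2⌋ := congrFun hl i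
    have h2 := Int.abs_sub_lt_one_of_floor_eq_floor h1
    have h3 : (tt b i w + 1) / 2 - (tt b i w' + 1) / 2 = (e (q i) w - e (q i) w') / (2 * ε) := by
      simp only [tt]; field_simp; ring
    rw [h3, abs_div, abs_of_pos (by positivity : 0 < 2 * ε), div_lt_one (by positivity)] at h2
    exact h2
  · intro k hk w; simp only [dif_pos hk]
    exact Finset.prod_nonneg fun i _ => hnn _ i w
  · intro w
    let b : Fin n → Bool := fun i => decide (Real.cos (Real.pi * (e (q i) w / ε)) < 0)
    refine ⟨(c.symm b).1, (c.symm b).2, ?_⟩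
    simp only [dif_pos (c.symm b).2]
    simp only [Fin.eta, Equiv.apply_symm_apply]
    refine le_of_eq ?_
    symm
    refine Finset.prod_eq_one fun i _ => ?_
    rw [min_eq_left]
    suffices 0 ≤ Real.cos (Real.pi * tt b i w) by linarith
    simp only [tt, s, b]
    by_cases h : Real.cos (Real.pi * (e (q i) w / ε)) < 0
    · simp only [h, decide_true, if_true]
      rw [mul_sub, mul_one, Real.cos_sub_pi]; linarith
    · simp only [h, decide_false]
      simpa using not_lt.1 h

lemma cell_lift {D X Y κ : Type*} [TopologicalSpace D] [CompactSpace D]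
    [TopologicalSpace X] [Nonempty X] [PseudoMetricSpace Y]
    [Fintype κ] (e : κ → D → ℝ) (he : ∀ i, Continuous (e i))
    (hinj : ∀ w w', (∀ i, e i w = e i w') → w = w')
    {f : X → Y} (hfc : Continuous f) (hcomp : IsCompressive f)
    {μ : D → ℝ} (hμ : Continuous μ) (hμ0 : ∀ z, 0 ≤ μ z)
    {ρ : D → D} (hρ : Continuous ρ) (hρA : ∀ z, 2 * μ z ≤ 1 → μ (ρ z) = 0)
    (hρi : ∀ z, μ z = 0 → ρ z = z)
    {φ : D → Y} (hφ : Continuous φ) {x : D → X} (hx : ContinuousOn x {z | μ z = 0})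
    (hfx : ∀ z, μ z = 0 → f (x z) = φ z) {δ : ℝ} (hδ : 0 < δ) :
    ∃ Ψ : D → X, Continuous Ψ ∧ (∀ z, μ z = 0 → Ψ z = x z) ∧ ∀ z, dist (f (Ψ z)) (φ z) < δ := by
  obtain ⟨m, hm⟩ := exists_colors e he hinj hφ
  obtain ⟨η, hη, H⟩ := glue_iter hfc hcomp (isCompact_range hφ) m hδ
  obtain ⟨J, β, lab, hβ, hlab, hmesh, hβ0, hβ1⟩ := hm η hη
  have hxρ : ContinuousOn (fun z => x (ρ z)) {z | 2 * μ z ≤ 1} :=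
    hx.comp hρ.continuousOn fun z hz => hρA z hz
  -- collar size
  have hT : IsCompact {z | 2 * μ z ≤ 1} := (isClosed_le (by fun_prop) continuous_const).isCompact
  have hdc : ContinuousOn (fun z => dist (f (x (ρ z))) (φ z)) {z | 2 * μ z ≤ 1} :=
    continuous_dist.comp_continuousOn ((hfc.comp_continuousOn hxρ).prodMk hφ.continuousOn)
  have hS : IsCompact ({z | 2 * μ z ≤ 1} ∩ (fun z => dist (f (x (ρ z))) (φ z)) ⁻¹' (Ici η)) :=
    hT.of_isClosed_subset (hdc.preimage_isClosed_of_isClosed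
      (isClosed_le (by fun_prop) continuous_const) isClosed_Ici) inter_subset_left
  obtain ⟨a, ha, hle⟩ := hS.exists_forall_le' hμ.continuousOn (a := 0) (by
    rintro z ⟨_, hz⟩
    refine lt_of_le_of_ne (hμ0 z) fun h => ?_
    have hz' : η ≤ dist (f (x (ρ z))) (φ z) := hz
    rw [hρi z h.symm, hfx z h.symm, dist_self] at hz'
    linarith)
  obtain ⟨ε, hε, hε1, hε2⟩ : ∃ ε > 0, 2 * ε ≤ 1/2 ∧ 2 * ε ≤ a :=
    ⟨min (1/4) (a/2), by positivity, by linarith [min_le_left (1/4) (a/2)],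
      by linarith [min_le_right (1/4) (a/2)]⟩
  let ν : D → ℝ := fun z => 2 - μ z / ε
  let k : D → ℝ := fun z => min 1 (μ z / ε)
  have hk : Continuous k := by simp only [k]; fun_prop
  have hk0 : ∀ z, 0 ≤ k z := fun z => le_min zero_le_one (div_nonneg (hμ0 z) hε.le)
  have hposb : ∀ i < m, ∀ w, 0 < β i w * k w → 0 < β i w := by
    intro i hi w h
    refine lt_of_le_of_ne (hβ0 i hi w) fun h0 => ?_
    rw [← h0] at h; simp at h
  obtain ⟨g', ν', hν', hg', hcov, heq⟩ := H J ν (fun i w => β i w * k w) lab (fun z => x (ρ z))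
    (by simp only [ν]; fun_prop) (fun i hi => (hβ i hi).mul hk)
    (fun i hi w h => hlab i hi w (hposb i hi w h))
    (fun i hi w w' h h' => hmesh i hi w w' (hposb i hi w h) (hposb i hi w' h'))
    (by
      intro w hw
      have hlt : μ w < 2 * ε := by
        have : μ w / ε < 2 := by simp only [ν] at hw; linarith
        rwa [div_lt_iff₀ hε] at this
      refine ⟨hxρ.continuousAt ?_, ?_⟩
      · filter_upwards [(hμ.tendsto w).eventually (gt_mem_nhds hlt)] with w' hw'
        show 2 * μ w' ≤ 1
        linarith
      · by_contra hc
        have := hle w ⟨(by show 2 * μ w ≤ 1; linarith), not_lt.1 hc⟩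
        linarith)
  have hall : ∀ w, 0 < ν' w := by
    intro w
    refine lt_of_lt_of_le one_pos (hcov w ?_)
    rcases le_total (μ w / ε) 1 with h | h
    · left; simp only [ν]; linarith
    · right
      obtain ⟨i, hi, h1⟩ := hβ1 w
      refine ⟨i, hi, ?_⟩
      simp only [k]; rw [min_eq_left h, mul_one]; exact h1
  refine ⟨g', continuous_iff_continuousAt.2 fun w => (hg' w (hall w)).1, fun z hz => ?_,
    fun w => (hg' w (hall w)).2⟩
  rw [heq z, hρi z hz]
  intro i _
  simp [k, hz]


/-- the mapping path space of `f` -/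
def PathFib {X : Type u} {Y : Type v} [TopologicalSpace X] [TopologicalSpace Y] (f : X → Y) :=
  {q : X × C(unitInterval, Y) // q.2 0 = f q.1}

instance {X : Type u} {Y : Type v} [TopologicalSpace X] [TopologicalSpace Y] (f : X → Y) :
    TopologicalSpace (PathFib f) := instTopologicalSpaceSubtype

lemma rlp {D : Type*} {X : Type u} {Y : Type v} {κ : Type*} [TopologicalSpace D] [CompactSpace D]
    [TopologicalSpace X] [Nonempty X] [MetricSpace Y] [Nonempty Y] (hY : IsANR Y)
    [Fintype κ] (e : κ → D → ℝ) (he : ∀ i, Continuous (e i))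
    (hinj : ∀ w w', (∀ i, e i w = e i w') → w = w')
    {f : X → Y} (hfc : Continuous f) (hcomp : IsCompressive f)
    {μ : D → ℝ} (hμ : Continuous μ) (hμ0 : ∀ z, 0 ≤ μ z)
    {R : D × unitInterval → D} (hR : Continuous R)
    (hRA : ∀ z (s : unitInterval), (s : ℝ) + 2 * μ z ≤ 1 → μ (R (z, s)) = 0)
    (hRi : ∀ z s, μ z = 0 → R (z, s) = z) (hR1 : ∀ z, R (z, 1) = z)
    {φ : D → Y} (hφ : Continuous φ) {u : D → PathFib f} (hu : ContinuousOn u {z | μ z = 0})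
    (hpu : ∀ z, μ z = 0 → (u z).1.2 1 = φ z) :
    ∃ G : D → PathFib f, Continuous G ∧ (∀ z, μ z = 0 → G z = u z) ∧
      ∀ z, (G z).1.2 1 = φ z := by
  classical
  obtain ⟨F, i1, i2, j, U, r, hlip, hj, hU, hjU, hr, hrj⟩ := anr_embed hY
  have hu1 : ContinuousOn (fun z => (u z).1.1) {z | μ z = 0} :=
    (continuous_fst.comp continuous_subtype_val).comp_continuousOn hu
  have hu2 : ContinuousOn (fun z => (u z).1.2) {z | μ z = 0} :=
    (continuous_snd.comp continuous_subtype_val).comp_continuousOn hu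
  let K : D × unitInterval → Y := fun p => if 1 ≤ (p.2 : ℝ) + 2 * μ p.1 then φ (R p) else
    (u (R p)).1.2 (projIcc 0 1 zero_le_one ((p.2 : ℝ) + 2 * μ p.1))
  have hlin : Continuous fun p : D × unitInterval => (p.2 : ℝ) + 2 * μ p.1 := by fun_prop
  have hK : Continuous K := by
    refine continuous_if_le continuous_const hlin (hφ.comp hR).continuousOn ?_ ?_
    · have h1 : ContinuousOn (fun p : D × unitInterval => (u (R p)).1.2)
          {p | (p.2 : ℝ) + 2 * μ p.1 ≤ 1} := hu2.comp hR.continuousOn fun p hp => hRA p.1 p.2 hp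
      exact (ContinuousEval.continuous_eval (F := C(unitInterval, Y))).comp_continuousOn
        (h1.prodMk ((continuous_projIcc (h := zero_le_one)).comp hlin).continuousOn)
    · rintro p hp
      rw [← hp, projIcc_right]
      exact (hpu _ (hRA p.1 p.2 hp.ge)).symm
  have hK1 : ∀ z, K (z, 1) = φ z := by
    intro z
    simp only [K]
    rw [if_pos (by have := hμ0 z; simp; linarith), hR1]
  have hKA : ∀ z s, μ z = 0 → K (z, s) = (u z).1.2 s := by
    intro z s hz
    simp only [K, hz, hRi z s hz, mul_zero, add_zero]
    split_ifs with h
    · have : s = 1 := le_antisymm s.2.2 h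
      rw [this, hpu z hz]
    · rw [projIcc_val]
  -- thickening
  have hC : IsCompact (range fun p => j (K p)) := isCompact_range (hj.comp hK)
  obtain ⟨δ, hδ, hthick⟩ := hC.exists_thickening_subset_open hU (by
    rintro _ ⟨p, rfl⟩; exact hjU _)
  obtain ⟨Ψ, hΨ, hΨA, hΨd⟩ := cell_lift e he hinj hfc hcomp hμ hμ0
    (ρ := fun z => R (z, 0)) (by fun_prop) (fun z hz => hRA z 0 (by simpa using hz))
    (fun z hz => hRi z 0 hz) (φ := fun z => K (z, 0)) (by fun_prop) hu1
    (fun z hz => by rw [hKA z 0 hz, (u z).2]) hδ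
  let L : D × unitInterval → F := fun p =>
    j (K p) + (1 - (p.2 : ℝ)) • (j (f (Ψ p.1)) - j (K (p.1, 0)))
  have hL : Continuous L := by fun_prop
  have hLU : ∀ p, L p ∈ U := by
    intro p
    refine hthick (Metric.mem_thickening_iff.2 ⟨j (K p), mem_range_self p, ?_⟩)
    rw [dist_eq_norm]
    simp only [L, add_sub_cancel_left]
    rw [norm_smul, Real.norm_eq_abs, abs_of_nonneg (by linarith [p.2.2.2])]
    have h1 := (hlip (f (Ψ p.1)) (K (p.1, 0))).trans_lt (hΨd p.1)
    have h2 : 1 - (p.2 : ℝ) ≤ 1 := by linarith [p.2.2.1]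
    have h3 := norm_nonneg (j (f (Ψ p.1)) - j (K (p.1, 0)))
    nlinarith
  have hrL : Continuous fun p => r (L p) := hr.comp_continuous hL hLU
  let K' : C(D × unitInterval, Y) := ⟨_, hrL⟩
  have hK'0 : ∀ z, K'.curry z 0 = f (Ψ z) := by
    intro z
    show r (L (z, 0)) = _
    simp [L, hrj]
  refine ⟨fun z => ⟨(Ψ z, K'.curry z), hK'0 z⟩, ?_, ?_, ?_⟩
  · exact Continuous.subtype_mk (hΨ.prodMk K'.curry.continuous) _
  · intro z hz
    refine Subtype.ext (Prod.ext (hΨA z hz) ?_)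
    ext s
    show r (L (z, s)) = (u z).1.2 s
    have h0 : f (Ψ z) = K (z, 0) := by rw [hΨA z hz, hKA z 0 hz, (u z).2]
    simp [L, h0, hrj, hKA z s hz]
  · intro z
    show r (L (z, 1)) = φ z
    simp [L, hrj, hK1]


/-- simplex on the finite vertex set `σ` -/
def Spx {I : Type*} (σ : Finset I) : Set (I → ℝ) :=
  {w | (∀ i, 0 ≤ w i) ∧ (∀ i, i ∉ σ → w i = 0) ∧ ∑ i ∈ σ, w i = 1}

/-- prism over a simplex -/
def Prism {I : Type*} (σ : Finset I) (s : ℝ) : Set ((I → ℝ) × ℝ) :=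
  {z | z.1 ∈ Spx σ ∧ |z.2| ≤ s}

lemma isClosed_Spx {I : Type*} (σ : Finset I) : IsClosed (Spx σ) := by
  simp only [Spx, ofPred_and, ofPred_forall]
  refine (isClosed_iInter fun i => isClosed_le continuous_const (continuous_apply i)).inter
    ((isClosed_iInter fun i => isClosed_iInter fun _ =>
      isClosed_eq (continuous_apply i) continuous_const).inter
      (isClosed_eq (by fun_prop) continuous_const))

lemma isClosed_Prism {I : Type*} (σ : Finset I) (s : ℝ) : IsClosed (Prism σ s) :=
  ((isClosed_Spx σ).preimage continuous_fst).inter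
    (isClosed_le (f := fun z : (I → ℝ) × ℝ => |z.2|) (by fun_prop) continuous_const)

lemma Spx_le_one {I : Type*} {σ : Finset I} {w : I → ℝ} (hw : w ∈ Spx σ) (i : I) : w i ≤ 1 := by
  by_cases h : i ∈ σ
  · rw [← hw.2.2]; exact Finset.single_le_sum (fun j _ => hw.1 j) h
  · rw [hw.2.1 i h]; norm_num

lemma isCompact_Prism {I : Type*} (σ : Finset I) (s : ℝ) : IsCompact (Prism σ s) := by
  refine IsCompact.of_isClosed_subset
    ((isCompact_univ_pi (fun _ : I => isCompact_Icc (a := (0:ℝ)) (b := 1))).prod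
      (isCompact_Icc (a := -s) (b := s))) (isClosed_Prism σ s) ?_
  rintro z ⟨h1, h2⟩
  exact ⟨fun i _ => ⟨h1.1 i, Spx_le_one h1 i⟩, abs_le.1 h2⟩

lemma Spx_sub {I : Type*} {σ τ : Finset I} {w : I → ℝ} (hw : w ∈ Spx σ) (h : τ ⊆ σ)
    (h0 : ∀ i ∈ σ, i ∉ τ → w i = 0) : w ∈ Spx τ := by
  refine ⟨hw.1, fun i hi => ?_, ?_⟩
  · by_cases h' : i ∈ σ
    · exact h0 i h' hi
    · exact hw.2.1 i h'
  · rw [← hw.2.2]; exact Finset.sum_subset h h0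

lemma prism_rlp {I : Type*} {X : Type u} {Y : Type v}
    [TopologicalSpace X] [Nonempty X] [MetricSpace Y] [Nonempty Y] (hY : IsANR Y)
    {f : X → Y} (hfc : Continuous f) (hcomp : IsCompressive f)
    (σ : Finset I) (hσ : σ.Nonempty) {s : ℝ} (hs : s = 0 ∨ s = 1)
    {h : (I → ℝ) × ℝ → Y} (hh : ContinuousOn h (Prism σ s))
    {u : (I → ℝ) × ℝ → PathFib f}
    (hu : ContinuousOn u {z | z ∈ Prism σ s ∧ ((∃ i ∈ σ, z.1 i = 0) ∨ |z.2| = 1)})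
    (hpu : ∀ z ∈ Prism σ s, ((∃ i ∈ σ, z.1 i = 0) ∨ |z.2| = 1) → (u z).1.2 1 = h z) :
    ∃ G : (I → ℝ) × ℝ → PathFib f, ContinuousOn G (Prism σ s) ∧
      (∀ z ∈ Prism σ s, ((∃ i ∈ σ, z.1 i = 0) ∨ |z.2| = 1) → G z = u z) ∧
      ∀ z ∈ Prism σ s, (G z).1.2 1 = h z := by
  classical
  have : CompactSpace (Prism σ s) := isCompact_iff_compactSpace.1 (isCompact_Prism σ s)
  let k : ℝ := σ.card
  have hk : 0 < k := by simp only [k]; exact_mod_cast hσ.card_pos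
  let c : I → ℝ := fun i => if i ∈ σ then 1 / k else 0
  have hcs : ∑ i ∈ σ, c i = 1 := by
    rw [Finset.sum_congr rfl (fun i hi => if_pos hi), Finset.sum_const, nsmul_eq_mul]
    exact mul_one_div_cancel hk.ne'
  let μ : Prism σ s → ℝ := fun z => min (σ.inf' hσ fun i => k * z.1.1 i) (1 - |z.1.2|)
  have hμc : Continuous μ := by
    refine Continuous.min (Continuous.finset_inf'_apply hσ fun i _ => ?_) (by fun_prop)
    fun_prop
  have hμw : ∀ z : Prism σ s, ∀ i ∈ σ, μ z ≤ k * z.1.1 i := fun z i hi =>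
    (min_le_left _ _).trans (Finset.inf'_le _ hi)
  have hμt : ∀ z : Prism σ s, μ z ≤ 1 - |z.1.2| := fun z => min_le_right _ _
  have hμe : ∀ z : Prism σ s, (∃ i ∈ σ, μ z = k * z.1.1 i) ∨ μ z = 1 - |z.1.2| := by
    intro z
    rcases min_choice (σ.inf' hσ fun i => k * z.1.1 i) (1 - |z.1.2|) with h | h
    · left
      obtain ⟨i, hi, he⟩ := Finset.exists_mem_eq_inf' hσ fun i => k * z.1.1 i
      exact ⟨i, hi, h.trans he⟩
    · right; exact h
  have hs1 : s ≤ 1 := by rcases hs with rfl | rfl <;> norm_num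
  have hμ0 : ∀ z, 0 ≤ μ z := by
    intro z
    rcases hμe z with ⟨i, hi, h⟩ | h <;> rw [h]
    · exact mul_nonneg hk.le (z.2.1.1 i)
    · have := z.2.2; linarith
  have hμbd : ∀ z : Prism σ s, μ z = 0 ↔ ((∃ i ∈ σ, z.1.1 i = 0) ∨ |z.1.2| = 1) := by
    intro z
    constructor
    · intro h0
      rcases hμe z with ⟨i, hi, h⟩ | h
      · left; refine ⟨i, hi, ?_⟩
        rw [h0] at h
        exact (mul_eq_zero.1 h.symm).resolve_left hk.ne'
      · right; linarith
    · rintro (⟨i, hi, h⟩ | h)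
      · have := hμw z i hi; rw [h, mul_zero] at this; exact le_antisymm this (hμ0 z)
      · have := hμt z; rw [h, sub_self] at this; exact le_antisymm this (hμ0 z)
  let M : Prism σ s × unitInterval → ℝ := fun p => max (1 - μ p.1) ((1 + (p.2 : ℝ)) / 2)
  have hMc : Continuous M := by fun_prop
  have hM2 : ∀ p, 1/2 ≤ M p := fun p => le_max_of_le_right (by linarith [p.2.2.1])
  have hM0 : ∀ p, 0 < M p := fun p => by linarith [hM2 p]
  have hMμ : ∀ p, 1 - μ p.1 ≤ M p := fun p => le_max_left _ _
  let R0 : Prism σ s × unitInterval → (I → ℝ) × ℝ := fun p =>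
    (fun i => c i + (p.1.1.1 i - c i) / M p, p.1.1.2 / M p)
  have hR0c : Continuous R0 := by
    have hne : ∀ p, M p ≠ 0 := fun p => (hM0 p).ne'
    refine Continuous.prodMk (continuous_pi fun i => ?_) ?_
    · refine continuous_const.add (Continuous.div (by fun_prop) hMc hne)
    · exact Continuous.div (by fun_prop) hMc hne
  have hR0σ : ∀ p, ∀ i ∈ σ, k * (R0 p).1 i = (M p + k * p.1.1.1 i - 1) / M p := by
    intro p i hi
    have := (hM0 p).ne'
    simp only [R0, c, if_pos hi]
    field_simp
    ring
  have hR0m : ∀ p, R0 p ∈ Prism σ s := by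
    intro p
    refine ⟨⟨fun i => ?_, fun i hi => ?_, ?_⟩, ?_⟩
    · by_cases hi : i ∈ σ
      · have h1 : 0 ≤ k * (R0 p).1 i := by
          rw [hR0σ p i hi]
          have := hμw p.1 i hi
          have := hMμ p
          exact div_nonneg (by linarith) (hM0 p).le
        exact nonneg_of_mul_nonneg_right h1 hk
      · simp [R0, c, hi, p.1.2.1.2.1 i hi]
    · simp [R0, c, hi, p.1.2.1.2.1 i hi]
    · simp only [R0]
      rw [Finset.sum_add_distrib, ← Finset.sum_div, Finset.sum_sub_distrib, hcs, p.1.2.1.2.2]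
      simp
    · show |p.1.1.2 / M p| ≤ s
      have h2 := p.1.2.2
      rw [abs_div, abs_of_pos (hM0 p), div_le_iff₀ (hM0 p)]
      rcases hs with rfl | rfl
      · simpa using h2
      · have := hμt p.1
        have := hMμ p
        linarith
  let R : Prism σ s × unitInterval → Prism σ s := fun p => ⟨R0 p, hR0m p⟩
  have hRM : ∀ p, M p = 1 → R p = p.1 := by
    intro p hp
    apply Subtype.ext
    simp only [R, R0, hp]
    refine Prod.ext (funext fun i => ?_) ?_ <;> simp
  have hRA : ∀ z (t : unitInterval), (t : ℝ) + 2 * μ z ≤ 1 → μ (R (z, t)) = 0 := by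
    intro z t ht
    have hMe : M (z, t) = 1 - μ z := max_eq_left (by simp only; linarith)
    rw [hμbd]
    rcases hμe z with ⟨i, hi, h⟩ | h
    · left
      refine ⟨i, hi, ?_⟩
      have h1 := hR0σ (z, t) i hi
      simp only [← h, hMe] at h1
      have : k * (R0 (z, t)).1 i = 0 := by rw [h1]; simp
      exact (mul_eq_zero.1 this).resolve_left hk.ne'
    · right
      show |z.1.2 / M (z, t)| = 1
      rw [abs_div, abs_of_pos (hM0 _), div_eq_one_iff_eq (hM0 _).ne', hMe]; linarith
  let e : Option σ → Prism σ s → ℝ := fun o z => o.elim z.1.2 fun i => z.1.1 i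
  obtain ⟨G, hGc, hGA, hGp⟩ := rlp (D := Prism σ s) hY e
    (by rintro (_ | i) <;> simp only [e, Option.elim] <;> fun_prop)
    (by
      intro w w' h
      apply Subtype.ext
      refine Prod.ext (funext fun i => ?_) (h none)
      by_cases hi : i ∈ σ
      · exact h (some ⟨i, hi⟩)
      · rw [w.2.1.2.1 i hi, w'.2.1.2.1 i hi])
    hfc hcomp hμc hμ0 (R := R) (hR0c.subtype_mk _) hRA
    (fun z t hz => hRM _ (by
      simp only [M, hz, sub_zero]
      exact max_eq_left (by linarith [t.2.2])))
    (fun z => hRM _ (by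
      simp only [M]
      rw [max_eq_right]
      · simp
      · have := hμ0 z; simp; linarith))
    (φ := fun z => h z.1) hh.domRestrict (u := fun z => u z.1)
    (hu.comp continuous_subtype_val.continuousOn fun z hz => ⟨z.2, (hμbd z).1 hz⟩)
    (fun z hz => hpu z.1 z.2 ((hμbd z).1 hz))
  refine ⟨fun z => if hz : z ∈ Prism σ s then G ⟨z, hz⟩ else u z, ?_, ?_, ?_⟩
  · rw [continuousOn_iff_continuous_domRestrict]
    convert hGc using 1
    ext z
    simp only [domRestrict_apply]
    rw [dif_pos z.2]
  · intro z hz hb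
    simp only [dif_pos hz]
    exact hGA _ ((hμbd _).2 hb)
  · intro z hz
    simp only [dif_pos hz]
    exact hGp _


lemma nerve_step {I : Type*} {X : Type u} {Y : Type v}
    [TopologicalSpace X] [Nonempty X] [MetricSpace Y] [Nonempty Y] (hY : IsANR Y)
    {f : X → Y} (hfc : Continuous f) (hcomp : IsCompressive f)
    {N : Set (Finset I)} (hN : ∀ σ ∈ N, ∀ τ, τ ⊆ σ → τ ∈ N) {s : ℝ} (hs : s = 0 ∨ s = 1)
    {h : (I → ℝ) × ℝ → Y} (hh : ∀ σ ∈ N, ContinuousOn h (Prism σ s))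
    {u : (I → ℝ) × ℝ → PathFib f}
    (hu : ∀ σ ∈ N, ContinuousOn u {z | z ∈ Prism σ s ∧ |z.2| = 1})
    (hpu : ∀ σ ∈ N, ∀ z ∈ Prism σ s, |z.2| = 1 → (u z).1.2 1 = h z)
    (k : ℕ) (G : (I → ℝ) × ℝ → PathFib f)
    (hG : ∀ σ ∈ N, σ.card ≤ k → ContinuousOn G (Prism σ s) ∧ ∀ z ∈ Prism σ s, (G z).1.2 1 = h z)
    (hGu : ∀ z, |z.2| = 1 → G z = u z) :
    ∃ G' : (I → ℝ) × ℝ → PathFib f,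
      ((∀ σ ∈ N, σ.card ≤ k + 1 →
        ContinuousOn G' (Prism σ s) ∧ ∀ z ∈ Prism σ s, (G' z).1.2 1 = h z) ∧
      (∀ z, |z.2| = 1 → G' z = u z)) ∧
      ∀ σ ∈ N, σ.card ≤ k → ∀ z ∈ Prism σ s, G' z = G z := by
  classical
  have key : ∀ σ : Finset I, ∃ H : (I → ℝ) × ℝ → PathFib f, σ ∈ N → σ.card = k + 1 →
      ContinuousOn H (Prism σ s) ∧
      (∀ z ∈ Prism σ s, ((∃ i ∈ σ, z.1 i = 0) ∨ |z.2| = 1) → H z = G z) ∧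
      ∀ z ∈ Prism σ s, (H z).1.2 1 = h z := by
    intro σ
    by_cases hσ : σ ∈ N ∧ σ.card = k + 1
    swap
    · exact ⟨G, fun a b => absurd ⟨a, b⟩ hσ⟩
    obtain ⟨hσN, hc⟩ := hσ
    have her : ∀ i ∈ σ, σ.erase i ∈ N ∧ (σ.erase i).card ≤ k := fun i hi =>
      ⟨hN σ hσN _ (Finset.erase_subset _ _), by rw [Finset.card_erase_of_mem hi]; omega⟩
    have hface : ∀ z ∈ Prism σ s, ∀ i ∈ σ, z.1 i = 0 → z ∈ Prism (σ.erase i) s := by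
      rintro z ⟨h1, h2⟩ i hi h0
      refine ⟨Spx_sub h1 (Finset.erase_subset _ _) fun j hj hj' => ?_, h2⟩
      have : j = i := by
        by_contra hne
        exact hj' (Finset.mem_erase.2 ⟨hne, hj⟩)
      rw [this, h0]
    have hq1 : ContinuousOn G {z | z ∈ Prism σ s ∧ ((∃ i ∈ σ, z.1 i = 0) ∨ |z.2| = 1)} := by
      let A : Option σ → Set ((I → ℝ) × ℝ) := fun o => match o with
        | none => {z | z ∈ Prism σ s ∧ |z.2| = 1}
        | some i => Prism (σ.erase i.1) s
      have hA : ContinuousOn G (⋃ o, A o) := by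
        refine (locallyFinite_of_finite A).continuousOn_iUnion ?_ ?_
        · rintro (_ | i)
          · exact (isClosed_Prism σ s).inter
              (isClosed_eq (f := fun z : (I → ℝ) × ℝ => |z.2|) (by fun_prop) continuous_const)
          · exact isClosed_Prism _ _
        · rintro (_ | i)
          · exact (hu σ hσN).congr fun z hz => hGu z hz.2
          · exact (hG _ (her i.1 i.2).1 (her i.1 i.2).2).1
      refine hA.mono ?_
      rintro z ⟨hz, ⟨i, hi, h0⟩ | h0⟩
      · exact mem_iUnion.2 ⟨some ⟨i, hi⟩, hface z hz i hi h0⟩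
      · exact mem_iUnion.2 ⟨none, hz, h0⟩
    have hq2 : ∀ z ∈ Prism σ s, ((∃ i ∈ σ, z.1 i = 0) ∨ |z.2| = 1) → (G z).1.2 1 = h z := by
      rintro z hz (⟨i, hi, h0⟩ | h0)
      · exact (hG _ (her i hi).1 (her i hi).2).2 z (hface z hz i hi h0)
      · rw [hGu z h0]; exact hpu σ hσN z hz h0
    obtain ⟨H, h1, h2, h3⟩ := prism_rlp hY hfc hcomp σ
      (Finset.card_pos.1 (by omega)) hs (hh σ hσN) (u := G) hq1 hq2
    exact ⟨H, fun _ _ => ⟨h1, h2, h3⟩⟩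
  choose H hH using key
  let P : Finset I → (I → ℝ) × ℝ → Prop := fun σ z =>
    σ ∈ N ∧ σ.card = k + 1 ∧ z ∈ Prism σ s ∧ ∀ i ∈ σ, z.1 i ≠ 0
  have huniq : ∀ σ τ z, P σ z → z ∈ Prism τ s → σ ⊆ τ := by
    intro σ τ z h1 h2 i hi
    by_contra hne
    exact h1.2.2.2 i hi (h2.1.2.1 i hne)
  let G' : (I → ℝ) × ℝ → PathFib f := fun z =>
    if |z.2| = 1 then u z else if hz : ∃ σ, P σ z then H hz.choose z else G z
  have hlow : ∀ σ ∈ N, σ.card ≤ k → ∀ z ∈ Prism σ s, G' z = G z := by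
    intro σ hσ hc z hz
    simp only [G']
    split_ifs with h1 h2
    · exact (hGu z h1).symm
    · exfalso
      obtain ⟨τ, hτ⟩ := h2
      have := Finset.card_le_card (huniq τ σ z hτ hz)
      have := hτ.2.1
      omega
    · rfl
  have hhigh : ∀ σ ∈ N, σ.card = k + 1 → ∀ z ∈ Prism σ s, G' z = H σ z := by
    intro σ hσ hc z hz
    obtain ⟨a, b, c⟩ := hH σ hσ hc
    simp only [G']
    split_ifs with h1 h2
    · rw [b z hz (Or.inr h1), hGu z h1]
    · have h3 := h2.choose_spec
      have : h2.choose = σ := Finset.eq_of_subset_of_card_le (huniq _ _ _ h3 hz)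
        (by rw [hc, h3.2.1])
      rw [this]
    · rw [b z hz]
      left
      by_contra! hne
      exact h2 ⟨σ, hσ, hc, hz, hne⟩
  refine ⟨G', ⟨fun σ hσ hc => ?_, fun z hz => if_pos hz⟩, hlow⟩
  rcases Nat.lt_or_ge k σ.card with hk | hk
  · have hc' : σ.card = k + 1 := by omega
    obtain ⟨a, b, c⟩ := hH σ hσ hc'
    exact ⟨a.congr (hhigh σ hσ hc'), fun z hz => by rw [hhigh σ hσ hc' z hz]; exact c z hz⟩
  · obtain ⟨a, b⟩ := hG σ hσ hk
    exact ⟨a.congr (hlow σ hσ hk), fun z hz => by rw [hlow σ hσ hk z hz]; exact b z hz⟩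

lemma nerve_lift {I : Type*} {X : Type u} {Y : Type v}
    [TopologicalSpace X] [Nonempty X] [MetricSpace Y] [Nonempty Y] (hY : IsANR Y)
    {f : X → Y} (hfc : Continuous f) (hcomp : IsCompressive f)
    {N : Set (Finset I)} (hN : ∀ σ ∈ N, ∀ τ, τ ⊆ σ → τ ∈ N) {s : ℝ} (hs : s = 0 ∨ s = 1)
    {h : (I → ℝ) × ℝ → Y} (hh : ∀ σ ∈ N, ContinuousOn h (Prism σ s))
    {u : (I → ℝ) × ℝ → PathFib f}
    (hu : ∀ σ ∈ N, ContinuousOn u {z | z ∈ Prism σ s ∧ |z.2| = 1})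
    (hpu : ∀ σ ∈ N, ∀ z ∈ Prism σ s, |z.2| = 1 → (u z).1.2 1 = h z) :
    ∃ G : (I → ℝ) × ℝ → PathFib f,
      (∀ σ ∈ N, ContinuousOn G (Prism σ s) ∧ ∀ z ∈ Prism σ s, (G z).1.2 1 = h z) ∧
      (∀ z, |z.2| = 1 → G z = u z) := by
  classical
  let Inv : ℕ → ((I → ℝ) × ℝ → PathFib f) → Prop := fun k G =>
    (∀ σ ∈ N, σ.card ≤ k →
        ContinuousOn G (Prism σ s) ∧ ∀ z ∈ Prism σ s, (G z).1.2 1 = h z) ∧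
      (∀ z, |z.2| = 1 → G z = u z)
  have h0 : Inv 0 u := by
    refine ⟨fun σ hσ hc => ?_, fun _ _ => rfl⟩
    have he : σ = ∅ := Finset.card_eq_zero.1 (by omega)
    have : Prism σ s = ∅ := by
      subst he
      refine eq_empty_of_forall_notMem fun z hz => ?_
      have := hz.1.2.2
      simp at this
    rw [this]
    exact ⟨continuousOn_empty _, fun z hz => absurd hz (notMem_empty _)⟩
  have hstep : ∀ k G, Inv k G → ∃ G', Inv (k + 1) G' ∧
      ∀ σ ∈ N, σ.card ≤ k → ∀ z ∈ Prism σ s, G' z = G z := fun k G hG =>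
    nerve_step hY hfc hcomp hN hs hh hu hpu k G hG.1 hG.2
  choose! St hSt hSt' using hstep
  let S : ℕ → ((I → ℝ) × ℝ → PathFib f) := fun k => Nat.rec u (fun n g => St n g) k
  have hS : ∀ k, Inv k (S k) := by
    intro k
    induction k with
    | zero => exact h0
    | succ n ih => exact hSt n _ ih
  have hmono : ∀ k m, k ≤ m → ∀ σ ∈ N, σ.card ≤ k → ∀ z ∈ Prism σ s, S m z = S k z := by
    intro k m hkm
    induction m, hkm using Nat.le_induction with
    | base => intros; rfl
    | succ m hm ih =>
      intro σ hσ hc z hz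
      rw [← ih σ hσ hc z hz]
      exact hSt' m (S m) (hS m) σ hσ (hc.trans hm) z hz
  let G : (I → ℝ) × ℝ → PathFib f := fun z =>
    if hz : ∃ σ ∈ N, z ∈ Prism σ s then S hz.choose.card z else u z
  have hG : ∀ σ ∈ N, ∀ z ∈ Prism σ s, G z = S σ.card z := by
    intro σ hσ z hz
    have hz' : ∃ σ ∈ N, z ∈ Prism σ s := ⟨σ, hσ, hz⟩
    simp only [G, dif_pos hz']
    have h3 := hz'.choose_spec
    rcases le_total hz'.choose.card σ.card with hl | hl
    · exact (hmono _ _ hl _ h3.1 le_rfl z h3.2).symm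
    · exact hmono _ _ hl _ hσ le_rfl z hz
  refine ⟨G, fun σ hσ => ?_, fun z hz => ?_⟩
  · obtain ⟨a, b⟩ := (hS σ.card).1 σ hσ le_rfl
    exact ⟨a.congr (hG σ hσ), fun z hz => by rw [hG σ hσ z hz]; exact b z hz⟩
  · simp only [G]
    split_ifs with h1
    · exact (hS _).2 z hz
    · rfl

lemma nerve_cont {I : Type*} {W : Type*} {E : Type*} [TopologicalSpace W] [TopologicalSpace E]
    {N : Set (Finset I)} (hN : ∀ σ ∈ N, ∀ τ, τ ⊆ σ → τ ∈ N) {s : ℝ}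
    {G : (I → ℝ) × ℝ → E} (hG : ∀ σ ∈ N, ContinuousOn G (Prism σ s))
    {Φ : W → I → ℝ} (hΦ : Continuous Φ)
    (hlf : LocallyFinite fun i => Function.support fun x => Φ x i)
    (hΦN : ∀ x, ∃ σ ∈ N, Φ x ∈ Spx σ) :
    ContinuousOn (fun p : W × ℝ => G (Φ p.1, p.2)) {p | |p.2| ≤ s} := by
  classical
  have hΨ : Continuous fun p : W × ℝ => (Φ p.1, p.2) := by fun_prop
  rintro ⟨x, t⟩ hp
  obtain ⟨O, hO, hfin⟩ := hlf x
  let F : Finset I := hfin.toFinset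
  let A : {τ : Finset I // τ ∈ F.powerset ∧ τ ∈ N} → Set (W × ℝ) := fun τ =>
    (fun p : W × ℝ => (Φ p.1, p.2)) ⁻¹' Prism τ.1 s
  have : Finite {τ : Finset I // τ ∈ F.powerset ∧ τ ∈ N} :=
    Finite.of_injective (β := F.powerset) (fun τ => ⟨τ.1, τ.2.1⟩) (by
      intro a b hab
      exact Subtype.ext (by simpa using hab))
  have hA : ContinuousOn (fun p : W × ℝ => G (Φ p.1, p.2)) (⋃ τ, A τ) := by
    refine (locallyFinite_of_finite A).continuousOn_iUnion ?_ ?_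
    · exact fun τ => (isClosed_Prism _ _).preimage hΨ
    · exact fun τ => (hG τ.1 τ.2.2).comp hΨ.continuousOn fun p hp => hp
  have hsub : ({p : W × ℝ | |p.2| ≤ s} ∩ Prod.fst ⁻¹' O) ⊆ ⋃ τ, A τ := by
    rintro ⟨y, t⟩ ⟨ht, hy⟩
    obtain ⟨σ, hσ, hyσ⟩ := hΦN y
    refine mem_iUnion.2 ⟨⟨σ ∩ F, Finset.mem_powerset.2 Finset.inter_subset_right,
      hN σ hσ _ Finset.inter_subset_left⟩, ?_, ht⟩
    refine Spx_sub hyσ Finset.inter_subset_left fun i hi hi' => ?_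
    by_contra hne
    exact hi' (Finset.mem_inter.2 ⟨hi, hfin.mem_toFinset.2 ⟨y, hne, hy⟩⟩)
  have hO' : Prod.fst ⁻¹' O ∈ 𝓝 (x, t) := continuous_fst.continuousAt.preimage_mem_nhds hO
  have := (hA.mono hsub) (x, t) ⟨hp, mem_of_mem_nhds hO'⟩
  exact (continuousWithinAt_inter hO').1 this


lemma dom {W : Type u} [MetricSpace W] [Nonempty W] (hW : IsANR W) :
    ∃ (N : Set (Finset W)) (Φ : W → W → ℝ) (ℓ : (W → ℝ) → W) (L : C(W, W)),
      (∀ σ ∈ N, ∀ τ, τ ⊆ σ → τ ∈ N) ∧ Continuous Φ ∧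
      (LocallyFinite fun i => Function.support fun x => Φ x i) ∧
      (∀ x, ∃ σ ∈ N, Φ x ∈ Spx σ) ∧ (∀ σ ∈ N, ContinuousOn ℓ (Spx σ)) ∧
      (∀ x, L x = ℓ (Φ x)) ∧ (ContinuousMap.id W).Homotopic L := by
  classical
  obtain ⟨F, i1, i2, e, U, r, hlip, he, hU, heU, hr, hre⟩ := anr_embed hW
  have hρ : ∀ i : W, ∃ ρ > 0, Metric.ball (e i) (2 * ρ) ⊆ U := by
    intro i
    obtain ⟨ε, hε, hb⟩ := Metric.isOpen_iff.1 hU (e i) (heU i)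
    exact ⟨ε / 2, by positivity, by rwa [mul_div_cancel₀ _ two_ne_zero]⟩
  choose ρ hρ0 hρU using hρ
  obtain ⟨φ, hφ⟩ := PartitionOfUnity.exists_isSubordinate (isClosed_univ (X := W))
    (fun i => e ⁻¹' Metric.ball (e i) (ρ i)) (fun i => Metric.isOpen_ball.preimage he)
    (fun x _ => mem_iUnion.2 ⟨x, Metric.mem_ball_self (hρ0 x)⟩)
  have hC : ∀ (σ : Finset W) (x : W), σ.Nonempty → (∀ i ∈ σ, e x ∈ Metric.ball (e i) (ρ i)) →
      ∃ C : Set F, Convex ℝ C ∧ C ⊆ U ∧ e x ∈ C ∧ ∀ i ∈ σ, e i ∈ C := by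
    intro σ x hσ hx
    obtain ⟨m, hm, hmax⟩ := σ.exists_max_image ρ hσ
    refine ⟨Metric.ball (e m) (2 * ρ m), convex_ball _ _, hρU m, ?_, fun i hi => ?_⟩
    · exact Metric.ball_subset_ball (by linarith [hρ0 m]) (hx m hm)
    · have h1 := Metric.mem_ball.1 (hx m hm)
      have h2 := Metric.mem_ball'.1 (hx i hi)
      have h3 := hmax i hi
      have h4 := dist_triangle (e i) (e x) (e m)
      rw [Metric.mem_ball]; linarith
  let N : Set (Finset W) := {σ | ∃ x, ∀ i ∈ σ, e x ∈ Metric.ball (e i) (ρ i)}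
  let Φ : W → W → ℝ := fun x i => φ i x
  let S : (W → ℝ) → F := fun w => ∑ᶠ i, w i • e i
  have hSs : ∀ σ : Finset W, ∀ w ∈ Spx σ, S w = ∑ i ∈ σ, w i • e i := by
    intro σ w hw
    refine finsum_eq_sum_of_support_subset _ fun i hi => ?_
    by_contra hne
    exact hi (by simp only [hw.2.1 i hne, zero_smul])
  have hne : ∀ σ : Finset W, ∀ w ∈ Spx σ, σ.Nonempty := by
    intro σ w hw
    by_contra h
    rw [Finset.not_nonempty_iff_eq_empty] at h
    have := hw.2.2
    simp [h] at this
  have hΦN : ∀ x, ∃ σ : Finset W, (∀ i ∈ σ, e x ∈ Metric.ball (e i) (ρ i)) ∧ Φ x ∈ Spx σ := by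
    intro x
    refine ⟨φ.finsupport x, fun i hi => ?_, fun i => φ.nonneg i x, fun i hi => ?_, ?_⟩
    · rw [PartitionOfUnity.mem_finsupport] at hi
      exact hφ i (subset_tsupport _ hi)
    · rw [PartitionOfUnity.mem_finsupport] at hi
      simpa using hi
    · exact φ.sum_finsupport (mem_univ x)
  have hScont : Continuous fun x => S (Φ x) :=
    φ.continuous_finsum_smul (g := fun i _ => e i) fun i x _ => continuousAt_const
  have hseg : ∀ x (t : unitInterval), (1 - (t : ℝ)) • e x + (t : ℝ) • S (Φ x) ∈ U := by
    intro x t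
    obtain ⟨σ, h1, h2⟩ := hΦN x
    obtain ⟨C, hc, hCU, hxC, hiC⟩ := hC σ x (hne σ _ h2) h1
    refine hCU (hc hxC ?_ (by linarith [t.2.2]) t.2.1 (by ring))
    rw [hSs σ _ h2]
    exact hc.sum_mem (fun i _ => h2.1 i) h2.2.2 hiC
  have hLc : Continuous fun x => r (S (Φ x)) := by
    refine hr.comp_continuous hScont fun x => ?_
    simpa using hseg x 1
  refine ⟨N, Φ, fun w => r (S w), ⟨_, hLc⟩, ?_, ?_, ?_, ?_, ?_, fun x => rfl, ⟨?_⟩⟩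
  · rintro σ ⟨x, hx⟩ τ hτ
    exact ⟨x, fun i hi => hx i (hτ hi)⟩
  · exact continuous_pi fun i => (φ i).continuous
  · exact φ.locallyFinite
  · intro x
    obtain ⟨σ, h1, h2⟩ := hΦN x
    exact ⟨σ, ⟨x, h1⟩, h2⟩
  · rintro σ ⟨x, hx⟩
    have h1 : ContinuousOn S (Spx σ) := by
      refine ContinuousOn.congr (f := fun w : W → ℝ => ∑ i ∈ σ, w i • e i) ?_ (hSs σ)
      exact Continuous.continuousOn (by fun_prop)
    refine hr.comp h1 fun w hw => ?_
    obtain ⟨C, hc, hCU, hxC, hiC⟩ := hC σ x (hne σ _ hw) hx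
    rw [hSs σ w hw]
    exact hCU (hc.sum_mem (fun i _ => hw.1 i) hw.2.2 hiC)
  · refine ⟨⟨fun p => r ((1 - (p.1 : ℝ)) • e p.2 + (p.1 : ℝ) • S (Φ p.2)), ?_⟩, ?_, ?_⟩
    · refine hr.comp_continuous ?_ fun p => hseg p.2 p.1
      have h5 : Continuous fun p : unitInterval × W => S (Φ p.2) := hScont.comp continuous_snd
      have h6 : Continuous fun p : unitInterval × W => (p.1 : ℝ) := by fun_prop
      exact ((continuous_const.sub h6).smul (he.comp continuous_snd)).add (h6.smul h5)
    · intro x; simp [hre]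
    · intro x; simp

/-- the endpoint map -/
def pEnd {X : Type u} {Y : Type v} [TopologicalSpace X] [TopologicalSpace Y] (f : X → Y) :
    C(PathFib f, Y) where
  toFun q := q.1.2 1
  continuous_toFun := (continuous_eval_const (1 : unitInterval)).comp
    (continuous_snd.comp continuous_subtype_val)

lemma lift_exists {X : Type u} {Y : Type v} {W : Type*}
    [TopologicalSpace X] [Nonempty X] [MetricSpace Y] [Nonempty Y] (hY : IsANR Y)
    {f : X → Y} (hfc : Continuous f) (hcomp : IsCompressive f)
    [MetricSpace W] [Nonempty W] (hW : IsANR W) (h : C(W, Y)) :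
    ∃ g : C(W, PathFib f), ((pEnd f).comp g).Homotopic h := by
  classical
  obtain ⟨N, Φ, ℓ, L, hN, hΦ, hlf, hΦN, hℓ, hL, hLh⟩ := dom hW
  obtain ⟨x0⟩ := ‹Nonempty X›
  have : Nonempty X := ⟨x0⟩
  let q0 : PathFib f := ⟨(x0, ContinuousMap.const _ (f x0)), rfl⟩
  have h0 : ∀ z : (W → ℝ) × ℝ, ∀ σ, z ∈ Prism σ 0 → |z.2| = 1 → False := by
    intro z σ hz h1
    have := hz.2
    linarith
  obtain ⟨G, hG, -⟩ := nerve_lift hY hfc hcomp hN (s := 0) (Or.inl rfl)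
    (h := fun z => h (ℓ z.1)) (u := fun _ => q0)
    (fun σ hσ => h.continuous.comp_continuousOn
      ((hℓ σ hσ).comp continuousOn_fst fun z hz => hz.1))
    (fun _ _ => continuousOn_const)
    (fun σ _ z hz h1 => (h0 z σ hz h1).elim)
  have hc := nerve_cont hN (fun σ hσ => (hG σ hσ).1) hΦ hlf hΦN
  have hgc : Continuous fun x => G (Φ x, 0) :=
    hc.comp_continuous (f := fun x : W => (x, (0 : ℝ))) (by fun_prop) (fun x => by simp)
  refine ⟨⟨_, hgc⟩, ?_⟩
  have : (pEnd f).comp ⟨_, hgc⟩ = h.comp L := by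
    ext x
    obtain ⟨σ, hσ, hx⟩ := hΦN x
    simp only [ContinuousMap.comp_apply, hL]
    exact (hG σ hσ).2 (Φ x, 0) ⟨hx, by simp⟩
  rw [this]
  simpa using (ContinuousMap.Homotopic.refl h).comp hLh.symm

lemma lift_unique {X : Type u} {Y : Type v} {W : Type*}
    [TopologicalSpace X] [Nonempty X] [MetricSpace Y] [Nonempty Y] (hY : IsANR Y)
    {f : X → Y} (hfc : Continuous f) (hcomp : IsCompressive f)
    [MetricSpace W] [Nonempty W] (hW : IsANR W) (g0 g1 : C(W, PathFib f))
    (hg : ((pEnd f).comp g0).Homotopic ((pEnd f).comp g1)) : g0.Homotopic g1 := by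
  classical
  obtain ⟨N, Φ, ℓ, L, hN, hΦ, hlf, hΦN, hℓ, hL, hLh⟩ := dom hW
  obtain ⟨H⟩ := hg
  let π : ℝ → unitInterval := fun t => projIcc 0 1 zero_le_one ((1 + t) / 2)
  have hπ : Continuous π := continuous_projIcc.comp (by fun_prop)
  have hπ0 : π (-1) = 0 := by
    simp only [π]; norm_num
  have hπ1 : π 1 = 1 := by
    simp only [π]; norm_num
  have hℓ1 : ∀ σ ∈ N, ContinuousOn (fun z : (W → ℝ) × ℝ => ℓ z.1) (Prism σ 1) := fun σ hσ =>
    (hℓ σ hσ).comp continuousOn_fst fun z hz => hz.1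
  have habs : ∀ t : ℝ, |t| = 1 → t = 1 ∨ t = -1 := fun t ht => eq_or_eq_neg_of_abs_eq ht
  let u : (W → ℝ) × ℝ → PathFib f := fun z => if z.2 = 1 then g1 (ℓ z.1) else g0 (ℓ z.1)
  obtain ⟨G, hG, hGu⟩ := nerve_lift hY hfc hcomp hN (s := 1) (Or.inr rfl)
    (h := fun z => H (π z.2, ℓ z.1)) (u := u)
    (fun σ hσ => H.continuous.comp_continuousOn
      ((hπ.comp continuous_snd).continuousOn.prodMk (hℓ1 σ hσ)))
    (by
      intro σ hσ
      have h1 : ContinuousOn u ((Prism σ 1 ∩ {z | z.2 = 1}) ∪ (Prism σ 1 ∩ {z | z.2 = -1})) := by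
        refine ContinuousOn.union_of_isClosed ?_ ?_
          ((isClosed_Prism σ 1).inter (isClosed_eq continuous_snd continuous_const))
          ((isClosed_Prism σ 1).inter (isClosed_eq continuous_snd continuous_const))
        · exact (g1.continuous.comp_continuousOn ((hℓ1 σ hσ).mono inter_subset_left)).congr
            fun z hz => if_pos hz.2
        · refine (g0.continuous.comp_continuousOn ((hℓ1 σ hσ).mono inter_subset_left)).congr
            fun z hz => if_neg ?_
          have : z.2 = -1 := hz.2
          rw [this]; norm_num
      refine h1.mono ?_
      rintro z ⟨hz, ht⟩
      rcases habs _ ht with h | h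
      · exact Or.inl ⟨hz, h⟩
      · exact Or.inr ⟨hz, h⟩)
    (by
      intro σ hσ z hz ht
      rcases habs _ ht with h | h
      · simp only [u, h, if_true, hπ1]
        exact (H.apply_one _).symm
      · simp only [u, h, hπ0]
        rw [if_neg (by norm_num)]
        exact (H.apply_zero _).symm)
  have hc := nerve_cont hN (fun σ hσ => (hG σ hσ).1) hΦ hlf hΦN
  have hhom : (g0.comp L).Homotopic (g1.comp L) := by
    refine ⟨⟨⟨fun p => G (Φ p.2, 2 * (p.1 : ℝ) - 1), ?_⟩, ?_, ?_⟩⟩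
    · refine hc.comp_continuous (f := fun p : unitInterval × W => (p.2, 2 * (p.1 : ℝ) - 1))
        (by fun_prop) fun p => ?_
      have h1 := p.1.2.1
      have h2 := p.1.2.2
      have h3 : |2 * (p.1 : ℝ) - 1| ≤ 1 := abs_le.2 ⟨by linarith, by linarith⟩
      exact h3
    · intro x
      simp only [ContinuousMap.comp_apply, hL]
      rw [hGu _ (by simp)]
      simp only [u]
      rw [if_neg (by norm_num)]
    · intro x
      simp only [ContinuousMap.comp_apply, hL]
      rw [hGu _ (by norm_num)]
      simp only [u]
      rw [if_pos (by norm_num)]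
  have e0 : g0.Homotopic (g0.comp L) := by
    simpa using (ContinuousMap.Homotopic.refl g0).comp hLh
  have e1 : g1.Homotopic (g1.comp L) := by
    simpa using (ContinuousMap.Homotopic.refl g1).comp hLh
  exact e0.trans (hhom.trans e1.symm)

theorem main_thm {X : Type u} {Y : Type v} [TopologicalSpace X] [MetricSpace Y]
    [ConnectedSpace X]
    (hX : ∃ (P : Type u) (_ : MetricSpace P), TopologicalSpace.SeparableSpace P ∧
      IsANR P ∧ Nonempty (ContinuousMap.HomotopyEquiv X P))
    (hY : IsANR Y)
    (f : X → Y) (hfc : Continuous f) (hfs : Function.Surjective f)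
    (hcomp : IsCompressive f) :
    ∃ g : C(Y, X),
      ((⟨f, hfc⟩ : C(X, Y)).comp g).Homotopic (ContinuousMap.id Y) ∧
      (g.comp (⟨f, hfc⟩ : C(X, Y))).Homotopic (ContinuousMap.id X) := by
  obtain ⟨Z, iZ, -, hZ, ⟨E⟩⟩ := hX
  have hXn : Nonempty X := ConnectedSpace.toNonempty
  obtain ⟨x0⟩ := hXn
  have : Nonempty X := ⟨x0⟩
  have : Nonempty Y := ⟨f x0⟩
  have : Nonempty Z := ⟨E.toFun x0⟩
  let fc : C(X, Y) := ⟨f, hfc⟩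
  let q : C(PathFib f, X) := ⟨fun z => z.1.1, continuous_fst.comp continuous_subtype_val⟩
  let j : C(X, PathFib f) := ⟨fun x => ⟨(x, ContinuousMap.const _ (f x)), rfl⟩,
    Continuous.subtype_mk (continuous_id.prodMk (ContinuousMap.continuous_const'.comp hfc)) _⟩
  have hqj : q.comp j = ContinuousMap.id X := rfl
  have hpj : (pEnd f).comp j = fc := rfl
  have hfq : (fc.comp q).Homotopic (pEnd f) := by
    refine ⟨⟨⟨fun p => p.2.1.2 p.1, ?_⟩, ?_, ?_⟩⟩
    · exact (ContinuousEval.continuous_eval (F := C(unitInterval, Y))).comp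
        (((continuous_snd.comp continuous_subtype_val).comp continuous_snd).prodMk continuous_fst)
    · intro z; exact z.2
    · intro z; rfl
  obtain ⟨s, hs⟩ := lift_exists hY hfc hcomp hY (ContinuousMap.id Y)
  have hfg : (fc.comp (q.comp s)).Homotopic (ContinuousMap.id Y) := by
    have h1 : ((fc.comp q).comp s).Homotopic ((pEnd f).comp s) :=
      hfq.comp (ContinuousMap.Homotopic.refl s)
    exact h1.trans hs
  refine ⟨q.comp s, hfg, ?_⟩
  let g := q.comp s
  let a : C(X, Z) := E.toFun
  let b : C(Z, X) := E.invFun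
  have hba : (b.comp a).Homotopic (ContinuousMap.id X) := E.left_inv
  have hU : (((j.comp g).comp fc).comp b).Homotopic (j.comp b) := by
    refine lift_unique hY hfc hcomp hZ _ _ ?_
    have h1 : ((fc.comp g).comp (fc.comp b)).Homotopic ((ContinuousMap.id Y).comp (fc.comp b)) :=
      hfg.comp (ContinuousMap.Homotopic.refl _)
    exact h1
  have hV : ((g.comp fc).comp b).Homotopic b :=
    (ContinuousMap.Homotopic.refl q).comp hU
  have h2 : ((g.comp fc).comp (b.comp a)).Homotopic (b.comp a) :=
    hV.comp (ContinuousMap.Homotopic.refl a)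
  have h3 : ((g.comp fc).comp (b.comp a)).Homotopic ((g.comp fc).comp (ContinuousMap.id X)) :=
    (ContinuousMap.Homotopic.refl _).comp hba
  exact (h3.symm.trans h2).trans hba


end Aux

/-- **Theorem 2 (main).** If `X` is a connected space homotopy equivalent to a
separable metric ANR, `Y` is a metric ANR, and `f : X → Y` is a compressive
continuous surjection, then `f` is a homotopy equivalence. -/
theorem stmt_7 {X : Type u} {Y : Type v} [TopologicalSpace X] [MetricSpace Y]
    [ConnectedSpace X]
    (hX : ∃ (P : Type u) (_ : MetricSpace P), TopologicalSpace.SeparableSpace P ∧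
      IsANR P ∧ Nonempty (ContinuousMap.HomotopyEquiv X P))
    (hY : IsANR Y)
    (f : X → Y) (hfc : Continuous f) (hfs : Function.Surjective f)
    (hcomp : IsCompressive f) :
    ∃ g : C(Y, X),
      ((⟨f, hfc⟩ : C(X, Y)).comp g).Homotopic (ContinuousMap.id Y) ∧
      (g.comp (⟨f, hfc⟩ : C(X, Y))).Homotopic (ContinuousMap.id X) := by
  exact main_thm hX hY f hfc hfs hcomp
end

section
/- Let Y be a metric space, X a topological space, and f : X → Y a compressive continuous surjection. Let K be a finite geometric simplicial complex in some finite-dimensional real vector space, J a subcomplex of K, and |K| and |J| their underlying polyhedra. Let g : |K| → Y be continuous and η : |J| → X continuous with f∘η = g restricted to |J|, and let W ⊆ Y × Y be a neighborhood of the diagonal {(y,y) : y ∈ Y}. Then there is a continuous extension γ : |K| → X of η such that (g(p), f(γ(p))) ∈ W for all p ∈ |K|. -/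
open Set Metric

/-- fixed-ε extension property -/
def ExtE {X Y E : Type*} [TopologicalSpace X] [MetricSpace Y] [TopologicalSpace E]
    (f : X → Y) (g : E → Y) (Q A : Set E) (ε : ℝ) : Prop :=
  ∃ δ > 0, ∀ φ : E → X, ContinuousOn φ A → (∀ p ∈ A, dist (g p) (f (φ p)) < δ) →
    ∃ γ : E → X, ContinuousOn γ Q ∧ EqOn γ φ A ∧ ∀ p ∈ Q, dist (g p) (f (γ p)) < ε

section abs
variable {X Y E : Type*} [TopologicalSpace X] [MetricSpace Y] [TopologicalSpace E]
    {f : X → Y} {g : E → Y}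

lemma ExtE.refl (A : Set E) {ε : ℝ} (hε : 0 < ε) : ExtE f g A A ε :=
  ⟨ε, hε, fun φ h1 h2 => ⟨φ, h1, fun _ _ => rfl, h2⟩⟩

lemma ExtE.trans {Q B A : Set E} {ε : ℝ} (h1 : ExtE f g Q B ε)
    (h2 : ∀ ε' > 0, ExtE f g B A ε') (hAB : A ⊆ B) : ExtE f g Q A ε := by
  obtain ⟨δ, hδ, H⟩ := h1
  obtain ⟨δ', hδ', H'⟩ := h2 δ hδ
  refine ⟨δ', hδ', fun φ c1 c2 => ?_⟩
  obtain ⟨γ', a1, a2, a3⟩ := H' φ c1 c2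
  obtain ⟨γ, b1, b2, b3⟩ := H γ' a1 a3
  exact ⟨γ, b1, fun x hx => (b2 (hAB hx)).trans (a2 hx), b3⟩

lemma ExtE.union {Q1 Q2 B1 B2 : Set E} {ε : ℝ} (h1 : ExtE f g Q1 B1 ε) (h2 : ExtE f g Q2 B2 ε)
    (c1 : IsClosed Q1) (c2 : IsClosed Q2) (s1 : B1 ⊆ Q1) (s2 : B2 ⊆ Q2)
    (hi : Q1 ∩ Q2 ⊆ B1 ∩ B2) : ExtE f g (Q1 ∪ Q2) (B1 ∪ B2) ε := by
  classical
  obtain ⟨δ1, hδ1, H1⟩ := h1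
  obtain ⟨δ2, hδ2, H2⟩ := h2
  refine ⟨min δ1 δ2, lt_min hδ1 hδ2, fun φ hc hd => ?_⟩
  obtain ⟨γ1, a1, a2, a3⟩ := H1 φ (hc.mono subset_union_left)
    (fun p hp => (hd p (Or.inl hp)).trans_le (min_le_left _ _))
  obtain ⟨γ2, b1, b2, b3⟩ := H2 φ (hc.mono subset_union_right)
    (fun p hp => (hd p (Or.inr hp)).trans_le (min_le_right _ _))
  set γ : E → X := fun x => if x ∈ Q1 then γ1 x else γ2 x with hγ
  have e1 : EqOn γ γ1 Q1 := fun x hx => by simp [hγ, hx]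
  have e2 : EqOn γ γ2 Q2 := fun x hx => by
    by_cases h : x ∈ Q1
    · have := hi ⟨h, hx⟩
      rw [e1 h, a2 this.1, b2 this.2]
    · simp [hγ, h]
  refine ⟨γ, (a1.congr e1).union_of_isClosed (b1.congr e2) c1 c2, ?_, ?_⟩
  · rintro x (hx | hx)
    · rw [e1 (s1 hx), a2 hx]
    · rw [e2 (s2 hx), b2 hx]
  · rintro x (hx | hx)
    · rw [e1 hx]; exact a3 x hx
    · rw [e2 hx]; exact b3 x hx

lemma ExtE.adj {Q A B : Set E} {ε : ℝ} (hε : 0 < ε) (h : ExtE f g Q B ε)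
    (cA : IsClosed A) (cQ : IsClosed Q) (hB : A ∩ Q = B) : ExtE f g (A ∪ Q) A ε := by
  have := (ExtE.refl (f := f) (g := g) A hε).union h cA cQ subset_rfl
    (hB ▸ inter_subset_right) (by rw [← hB]; exact subset_inter inter_subset_left subset_rfl)
  rwa [union_eq_left.2 (hB ▸ inter_subset_left : B ⊆ A)] at this

lemma ExtE.transfer {E' : Type*} [TopologicalSpace E'] [T2Space E] {Q' A' : Set E'} {Q A : Set E}
    {ε : ℝ} (π : E' → E) (hQ : IsCompact Q') (hπ : ContinuousOn π Q') (hinj : InjOn π Q')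
    (him : π '' Q' = Q) (hA' : A' ⊆ Q') (hA : π '' A' = A)
    (h : ExtE f (g ∘ π) Q' A' ε) : ExtE f g Q A ε := by
  obtain ⟨δ, hδ, H⟩ := h
  subst him hA
  refine ⟨δ, hδ, fun φ c d => ?_⟩
  obtain ⟨γ', a1, a2, a3⟩ := H (φ ∘ π) (c.comp (hπ.mono hA') (mapsTo_image _ _))
    (fun p hp => d _ (mem_image_of_mem _ hp))
  rcases isEmpty_or_nonempty E' with hE | hE
  · refine ⟨φ, ?_, ?_, ?_⟩ <;> simp [Set.eq_empty_of_isEmpty, EqOn]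
  set γ : E → X := fun x => γ' (Function.invFunOn π Q' x) with hγ
  have key : ∀ x ∈ Q', γ (π x) = γ' x := fun x hx => by
    simp only [hγ]; rw [hinj.leftInvOn_invFunOn hx]
  refine ⟨γ, ?_, ?_, ?_⟩
  · rw [continuousOn_iff_continuous_domRestrict]
    have : CompactSpace Q' := isCompact_iff_compactSpace.1 hQ
    let q : Q' → π '' Q' := (mapsTo_image π Q').restrict
    have hq : Continuous q := hπ.mapsToRestrict _
    have hqs : Function.Surjective q := by
      rintro ⟨_, x, hx, rfl⟩; exact ⟨⟨x, hx⟩, rfl⟩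
    rw [(hq.isClosedMap.isQuotientMap hq hqs).continuous_iff]
    have : (π '' Q').domRestrict γ ∘ q = Q'.domRestrict γ' := by
      ext x; exact key x x.2
    rw [this]; exact continuousOn_iff_continuous_domRestrict.1 a1
  · rintro _ ⟨x, hx, rfl⟩
    rw [key x (hA' hx)]; exact a2 hx
  · rintro _ ⟨x, hx, rfl⟩
    rw [key x hx]; exact a3 x hx

/-- cone construction -/
lemma cone_ext {Q A : Set E} (U V : Set X) (ξ : X × ℝ → X) (c : X)
    (hξ : ContinuousOn ξ (U ×ˢ Icc 0 1)) (hV : MapsTo ξ (U ×ˢ Icc 0 1) V)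
    (h0 : ∀ x ∈ U, ξ (x, 0) = x) (h1 : ∀ x ∈ U, ξ (x, 1) = c) (hc : c ∈ V)
    (r : E → ℝ) (hr : Continuous r) (q : E → E) (hQ : IsClosed Q)
    (hq : ContinuousOn q (Q ∩ {x | 1 / 2 ≤ r x})) (hqA : MapsTo q (Q ∩ {x | 1 / 2 ≤ r x}) A)
    (hAQ : A ⊆ Q) (hrQ : ∀ x ∈ Q, r x ≤ 1) (hrA : ∀ x ∈ A, r x = 1) (hqid : ∀ x ∈ A, q x = x)
    (φ : E → X) (hφ : ContinuousOn φ A) (hφU : MapsTo φ A U) :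
    ∃ γ : E → X, ContinuousOn γ Q ∧ EqOn γ φ A ∧ MapsTo γ Q V := by
  classical
  set γ2 : E → X := fun x => ξ (φ (q x), 2 * (1 - r x)) with hγ2
  set γ : E → X := fun x => if r x ≤ 1 / 2 then c else γ2 x with hγ
  have m2 : MapsTo (fun x => (φ (q x), 2 * (1 - r x))) (Q ∩ {x | 1 / 2 ≤ r x}) (U ×ˢ Icc 0 1) := by
    intro x hx
    have h1 := hrQ x hx.1
    have h2 : 1 / 2 ≤ r x := hx.2
    exact ⟨hφU (hqA hx), by constructor <;> linarith⟩
  have c2 : ContinuousOn γ2 (Q ∩ {x | 1 / 2 ≤ r x}) := by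
    refine hξ.comp (f := fun x => (φ (q x), 2 * (1 - r x))) ?_ m2
    exact (hφ.comp hq hqA).prodMk (by fun_prop)
  have e1 : EqOn γ (fun _ => c) (Q ∩ {x | r x ≤ 1 / 2}) := fun x hx => by
    have : r x ≤ 1 / 2 := hx.2
    simp only [hγ, if_pos this]
  have e2 : EqOn γ γ2 (Q ∩ {x | 1 / 2 ≤ r x}) := fun x hx => by
    by_cases h : r x ≤ 1 / 2
    · have h' : r x = 1 / 2 := le_antisymm h hx.2
      rw [e1 ⟨hx.1, h⟩]
      simp only [hγ2, h']
      rw [show (2 : ℝ) * (1 - 1 / 2) = 1 by norm_num, h1 _ (hφU (hqA hx))]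
    · simp only [hγ, if_neg h]
  refine ⟨γ, ?_, ?_, ?_⟩
  · have := (continuousOn_const.congr e1).union_of_isClosed (c2.congr e2)
      (hQ.inter (isClosed_le hr continuous_const)) (hQ.inter (isClosed_le continuous_const hr))
    refine this.mono fun x hx => ?_
    rcases le_total (r x) (1 / 2) with h | h
    · exact Or.inl ⟨hx, h⟩
    · exact Or.inr ⟨hx, h⟩
  · intro x hx
    have hr1 := hrA x hx
    rw [e2 ⟨hAQ hx, by simp only [mem_ofPred_eq, hr1]; norm_num⟩]
    simp only [hγ2, hr1, hqid x hx, sub_self, mul_zero]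
    exact h0 _ (hφU hx)
  · intro x hx
    rcases le_total (r x) (1 / 2) with h | h
    · rw [e1 ⟨hx, h⟩]; exact hc
    · rw [e2 ⟨hx, h⟩]; exact hV (m2 ⟨hx, h⟩)

lemma compress_unif_s10 (hcomp : IsCompressive f) {C : Set Y} (hC : IsCompact C) {ε : ℝ} (hε : 0 < ε) :
    ∃ δ > 0, ∀ y ∈ C, ∃ (ξ : X × ℝ → X) (c : X),
      ContinuousOn ξ ((f ⁻¹' ball y δ) ×ˢ Icc 0 1) ∧
      MapsTo ξ ((f ⁻¹' ball y δ) ×ˢ Icc 0 1) (f ⁻¹' ball y ε) ∧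
      (∀ x ∈ f ⁻¹' ball y δ, ξ (x, 0) = x) ∧ (∀ x ∈ f ⁻¹' ball y δ, ξ (x, 1) = c) ∧
      c ∈ f ⁻¹' ball y ε := by
  classical
  choose V' hV' hp using fun y => hcomp y (ball y (ε / 2)) isOpen_ball (mem_ball_self (half_pos hε))
  obtain ⟨δ, hδ, H⟩ := lebesgue_number_lemma_of_metric hC (c := V') (fun y => (hp y).1)
    (fun y _ => mem_iUnion.2 ⟨y, hV' y⟩)
  refine ⟨δ, hδ, fun y hy => ?_⟩
  obtain ⟨z, hz⟩ := H y hy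
  obtain ⟨o1, o2, hsub, ζ, hζ, z0, c, z1⟩ := hp z
  have hyz : dist y z < ε / 2 := hsub (hz (mem_ball_self hδ))
  have hball : f ⁻¹' ball z (ε / 2) ⊆ f ⁻¹' ball y ε := by
    refine preimage_mono (ball_subset_ball' ?_)
    rw [dist_comm]; linarith
  set S : Set (X × ℝ) := (f ⁻¹' ball y δ) ×ˢ Icc 0 1
  set ξ : X × ℝ → X := fun p => if h : p.1 ∈ f ⁻¹' V' z ∧ p.2 ∈ Icc (0 : ℝ) 1 then
    (ζ (⟨p.1, h.1⟩, ⟨p.2, h.2⟩) : X) else c with hξ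
  have hS : ∀ p ∈ S, p.1 ∈ f ⁻¹' V' z ∧ p.2 ∈ Icc (0 : ℝ) 1 := fun p hp => ⟨hz hp.1, hp.2⟩
  have eS : ∀ p (hp : p ∈ S), ξ p = (ζ (⟨p.1, (hS p hp).1⟩, ⟨p.2, (hS p hp).2⟩) : X) :=
    fun p hp => by simp only [hξ]; rw [dif_pos (hS p hp)]
  refine ⟨ξ, c, ?_, ?_, ?_, ?_, hball c.2⟩
  · rw [continuousOn_iff_continuous_domRestrict]
    have : S.domRestrict ξ = fun p : S =>
        (ζ (⟨p.1.1, (hS p p.2).1⟩, ⟨p.1.2, (hS p p.2).2⟩) : X) := by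
      ext p; exact eS p p.2
    rw [this]
    refine continuous_subtype_val.comp (hζ.comp ?_)
    refine Continuous.prodMk ?_ ?_
    · exact Continuous.subtype_mk (by fun_prop) _
    · exact Continuous.subtype_mk (by fun_prop) _
  · intro p hp
    rw [eS p hp]; exact hball (ζ _).2
  · intro x hx
    rw [eS (x, 0) ⟨hx, by simp⟩]
    exact z0 _
  · intro x hx
    rw [eS (x, 1) ⟨hx, by simp⟩]
    exact congrArg Subtype.val (z1 ⟨x, hz hx⟩)
end abs

section box
variable {X Y ι : Type*} [TopologicalSpace X] [MetricSpace Y] [Fintype ι] [DecidableEq ι]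
    {f : X → Y} {g : (ι → ℝ) → Y}

/-- relative boundary of a box -/
def bd (a b : ι → ℝ) : Set (ι → ℝ) := {x | x ∈ Icc a b ∧ ∃ i, a i < b i ∧ (x i = a i ∨ x i = b i)}

lemma bd_closed (a b : ι → ℝ) : IsClosed (bd a b) := by
  have : bd a b = ⋃ i, {x | x ∈ Icc a b ∧ a i < b i ∧ (x i = a i ∨ x i = b i)} := by
    ext x; simp [bd]
  rw [this]
  refine isClosed_iUnion_of_finite fun i => ?_
  refine IsClosed.and isClosed_Icc (IsClosed.and isClosed_const ?_)
  exact (isClosed_eq (continuous_apply i) continuous_const).union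
    (isClosed_eq (continuous_apply i) continuous_const)

lemma bd_sub (a b : ι → ℝ) : bd a b ⊆ Icc a b := fun _ hx => hx.1

lemma box_cone (a b : ι → ℝ) (U V : Set X) (ξ : X × ℝ → X) (c : X)
    (hξ : ContinuousOn ξ (U ×ˢ Icc 0 1)) (hV : MapsTo ξ (U ×ˢ Icc 0 1) V)
    (h0 : ∀ x ∈ U, ξ (x, 0) = x) (h1 : ∀ x ∈ U, ξ (x, 1) = c) (hc : c ∈ V)
    (φ : (ι → ℝ) → X) (hφ : ContinuousOn φ (bd a b)) (hφU : MapsTo φ (bd a b) U) :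
    ∃ γ : (ι → ℝ) → X, ContinuousOn γ (Icc a b) ∧ EqOn γ φ (bd a b) ∧ MapsTo γ (Icc a b) V := by
  set h : ι → ℝ := fun i => (b i - a i) / 2 with hh
  set m : ι → ℝ := fun i => (a i + b i) / 2 with hm
  set r : (ι → ℝ) → ℝ := fun x => ‖(fun i => (x i - m i) / h i : ι → ℝ)‖ with hr
  have hrc : Continuous r := by fun_prop
  set q : (ι → ℝ) → (ι → ℝ) := fun x i => m i + (x i - m i) / r x with hq
  have hle : ∀ x i, |(x i - m i) / h i| ≤ r x := fun x i =>
    norm_le_pi_norm (fun i => (x i - m i) / h i : ι → ℝ) i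
  have hge : ∀ x, 0 < r x → ∃ i, r x = |(x i - m i) / h i| := by
    intro x hx
    by_contra! hcon
    have : r x < r x := (pi_norm_lt_iff hx).2 fun i => lt_of_le_of_ne (hle x i) (hcon i).symm
    exact lt_irrefl _ this
  have hrQ : ∀ x ∈ Icc a b, r x ≤ 1 := by
    intro x hx
    refine (pi_norm_le_iff_of_nonneg zero_le_one).2 fun i => ?_
    have h1 := hx.1 i
    have h2 := hx.2 i
    rw [Real.norm_eq_abs, abs_div]
    refine div_le_one_of_le₀ ?_ (abs_nonneg _)
    rw [abs_of_nonneg (show 0 ≤ h i by simp only [hh]; linarith), abs_le]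
    simp only [hh, hm]; constructor <;> linarith
  have hrA : ∀ x ∈ bd a b, r x = 1 := by
    rintro x ⟨hx, i, hi, hxi⟩
    refine le_antisymm (hrQ x hx) (le_trans (le_of_eq ?_) (hle x i))
    have hpos : 0 < h i := by simp only [hh]; linarith
    rw [abs_div, abs_of_pos hpos, eq_div_iff hpos.ne', one_mul]
    rcases hxi with e | e
    · rw [e, abs_of_nonpos] <;> simp only [hh, hm] <;> linarith
    · rw [e, abs_of_nonneg] <;> simp only [hh, hm] <;> linarith
  refine cone_ext U V ξ c hξ hV h0 h1 hc r hrc q isClosed_Icc ?_ ?_ (bd_sub a b) hrQ hrA ?_ φ hφ hφU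
  · refine continuousOn_pi.2 fun i => ?_
    refine continuousOn_const.add (ContinuousOn.div (by fun_prop) hrc.continuousOn ?_)
    rintro x ⟨-, hx⟩
    have : 1 / 2 ≤ r x := hx
    linarith
  · rintro x ⟨hx, hx2⟩
    have hx2 : 1 / 2 ≤ r x := hx2
    have hr0 : 0 < r x := by linarith
    have habs : ∀ i, |(x i - m i) / r x| ≤ h i := by
      intro i
      have h1 : a i ≤ x i := hx.1 i
      have h2 : x i ≤ b i := hx.2 i
      have hh0 : 0 ≤ h i := by simp only [hh]; linarith
      rw [abs_div, abs_of_pos hr0, div_le_iff₀ hr0]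
      rcases hh0.eq_or_lt with e | e
      · rw [← e, zero_mul]
        simp only [hh] at e
        simp only [hm]
        rw [abs_le]; constructor <;> linarith
      · have := hle x i
        rw [abs_div, abs_of_pos e, div_le_iff₀ e] at this
        linarith
    refine ⟨⟨fun i => ?_, fun i => ?_⟩, ?_⟩
    · have := (abs_le.1 (habs i)).1
      simp only [hq, hh, hm] at this ⊢; linarith
    · have := (abs_le.1 (habs i)).2
      simp only [hq, hh, hm] at this ⊢; linarith
    · obtain ⟨i, hi⟩ := hge x hr0
      have h1 : a i ≤ x i := hx.1 i
      have h2 : x i ≤ b i := hx.2 i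
      have hh0 : 0 ≤ h i := by simp only [hh]; linarith
      have hhne : h i ≠ 0 := by
        intro e; rw [e, div_zero, abs_zero] at hi; linarith
      have hpos : 0 < h i := lt_of_le_of_ne hh0 hhne.symm
      rw [abs_div, abs_of_pos hpos, eq_div_iff hhne] at hi
      refine ⟨i, by simp only [hh] at hpos; linarith, ?_⟩
      rcases abs_choice (x i - m i) with e | e
      · right
        have : (x i - m i) / r x = h i := by rw [div_eq_iff hr0.ne', ← e, ← hi]; ring
        simp only [hq, this]; simp only [hm, hh]; ring
      · left
        have : (x i - m i) / r x = - h i := by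
          rw [div_eq_iff hr0.ne']; linarith
        simp only [hq, this]; simp only [hm, hh]; ring
  · intro x hx
    ext i
    simp [hq, hrA x hx]

lemma box_cut (a b : ι → ℝ) (j : ι) (m : ℝ) (h1 : a j < m) (h2 : m < b j) {ε : ℝ}
    (hF : ∀ ε' > 0, ExtE f g (Icc (Function.update a j m) (Function.update b j m))
      (bd (Function.update a j m) (Function.update b j m)) ε')
    (hQ1 : ExtE f g (Icc a (Function.update b j m)) (bd a (Function.update b j m)) ε)
    (hQ2 : ExtE f g (Icc (Function.update a j m) b) (bd (Function.update a j m) b) ε) :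
    ExtE f g (Icc a b) (bd a b) ε := by
  set F := Icc (Function.update a j m) (Function.update b j m)
  have mF : ∀ x, x ∈ F ↔ x ∈ Icc a b ∧ x j = m := by
    intro x
    simp only [F, mem_Icc, Pi.le_def]
    constructor
    · rintro ⟨p, q⟩
      have hj : x j = m := le_antisymm (by simpa using q j) (by simpa using p j)
      refine ⟨⟨fun i => ?_, fun i => ?_⟩, hj⟩
      · by_cases e : i = j
        · subst e; linarith
        · simpa [e] using p i
      · by_cases e : i = j
        · subst e; linarith
        · simpa [e] using q i
    · rintro ⟨⟨p, q⟩, hj⟩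
      refine ⟨fun i => ?_, fun i => ?_⟩
      · by_cases e : i = j
        · subst e; simp [hj]
        · simpa [e] using p i
      · by_cases e : i = j
        · subst e; simp [hj]
        · simpa [e] using q i
  have m1 : ∀ x, x ∈ Icc a (Function.update b j m) ↔ x ∈ Icc a b ∧ x j ≤ m := by
    intro x
    simp only [mem_Icc, Pi.le_def]
    constructor
    · rintro ⟨p, q⟩
      have hj : x j ≤ m := by simpa using q j
      refine ⟨⟨p, fun i => ?_⟩, hj⟩
      by_cases e : i = j
      · subst e; linarith
      · simpa [e] using q i
    · rintro ⟨⟨p, q⟩, hj⟩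
      refine ⟨p, fun i => ?_⟩
      by_cases e : i = j
      · subst e; simp [hj]
      · simpa [e] using q i
  have m2 : ∀ x, x ∈ Icc (Function.update a j m) b ↔ x ∈ Icc a b ∧ m ≤ x j := by
    intro x
    simp only [mem_Icc, Pi.le_def]
    constructor
    · rintro ⟨p, q⟩
      have hj : m ≤ x j := by simpa using p j
      refine ⟨⟨fun i => ?_, q⟩, hj⟩
      by_cases e : i = j
      · subst e; linarith
      · simpa [e] using p i
    · rintro ⟨⟨p, q⟩, hj⟩
      refine ⟨fun i => ?_, q⟩
      by_cases e : i = j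
      · subst e; simp [hj]
      · simpa [e] using p i
  have bF : bd a b ∩ F = bd (Function.update a j m) (Function.update b j m) := by
    ext x
    constructor
    · rintro ⟨⟨hx, i, hi, hxi⟩, hxF⟩
      refine ⟨hxF, i, ?_⟩
      have hj := ((mF x).1 hxF).2
      have e : i ≠ j := by
        rintro rfl
        rcases hxi with h | h <;> linarith
      simpa [e] using ⟨hi, hxi⟩
    · rintro ⟨hxF, i, hi, hxi⟩
      have e : i ≠ j := by
        rintro rfl
        simp at hi
      refine ⟨⟨((mF x).1 hxF).1, i, ?_⟩, hxF⟩
      simpa [e] using And.intro hi hxi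
  have b12 : bd a (Function.update b j m) ∪ bd (Function.update a j m) b = bd a b ∪ F := by
    ext x
    constructor
    · rintro (⟨hx, i, hi, hxi⟩ | ⟨hx, i, hi, hxi⟩)
      · have hx' := (m1 x).1 hx
        by_cases e : i = j
        · subst e
          rcases hxi with h | h
          · exact Or.inl ⟨hx'.1, i, by linarith, Or.inl h⟩
          · exact Or.inr ((mF x).2 ⟨hx'.1, by simpa using h⟩)
        · simp only [Function.update_of_ne e] at hi hxi
          exact Or.inl ⟨hx'.1, i, hi, hxi⟩
      · have hx' := (m2 x).1 hx
        by_cases e : i = j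
        · subst e
          rcases hxi with h | h
          · exact Or.inr ((mF x).2 ⟨hx'.1, by simpa using h⟩)
          · exact Or.inl ⟨hx'.1, i, by linarith, Or.inr h⟩
        · simp only [Function.update_of_ne e] at hi hxi
          exact Or.inl ⟨hx'.1, i, hi, hxi⟩
    · rintro (⟨hx, i, hi, hxi⟩ | hx)
      · by_cases e : i = j
        · subst e
          rcases hxi with h | h
          · exact Or.inl ⟨(m1 x).2 ⟨hx, by linarith⟩, i, by simpa using h1, Or.inl h⟩
          · exact Or.inr ⟨(m2 x).2 ⟨hx, by linarith⟩, i, by simpa using h2, Or.inr h⟩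
        · rcases le_total (x j) m with h | h
          · exact Or.inl ⟨(m1 x).2 ⟨hx, h⟩, i, by simpa [e] using hi, by simpa [e] using hxi⟩
          · exact Or.inr ⟨(m2 x).2 ⟨hx, h⟩, i, by simpa [e] using hi, by simpa [e] using hxi⟩
      · have := (mF x).1 hx
        exact Or.inl ⟨(m1 x).2 ⟨this.1, this.2.le⟩, j, by simpa using h1, Or.inr (by simpa using this.2)⟩
  have q12 : Icc a (Function.update b j m) ∪ Icc (Function.update a j m) b = Icc a b := by
    ext x
    rw [mem_union, m1, m2, ← and_or_left]
    exact and_iff_left (le_total _ _)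
  have hu := hQ1.union hQ2 isClosed_Icc isClosed_Icc (bd_sub _ _) (bd_sub _ _) (by
    rintro x ⟨hx1, hx2⟩
    have e1 := (m1 x).1 hx1
    have e2 := (m2 x).1 hx2
    have e : x j = m := le_antisymm e1.2 e2.2
    exact ⟨⟨hx1, j, by simpa using h1, Or.inr (by simpa using e)⟩,
      ⟨hx2, j, by simpa using h2, Or.inl (by simpa using e)⟩⟩)
  rw [q12, b12] at hu
  exact hu.trans (fun ε' hε' => (hF ε' hε').adj hε' (bd_closed a b) isClosed_Icc bF) subset_union_left

lemma small_box (hcomp : IsCompressive f) {Q : Set (ι → ℝ)} (hQ : IsCompact Q)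
    (hg : ContinuousOn g Q) {ε : ℝ} (hε : 0 < ε) :
    ∃ ρ > 0, ∀ a b : ι → ℝ, a ≤ b → Icc a b ⊆ Q → (∀ i, b i - a i ≤ ρ) →
      ExtE f g (Icc a b) (bd a b) ε := by
  obtain ⟨δ, hδ, H⟩ := compress_unif_s10 hcomp (hQ.image_of_continuousOn hg) (half_pos hε)
  have hu := hQ.uniformContinuousOn_of_continuous hg
  obtain ⟨ρ, hρ, hρ'⟩ := Metric.uniformContinuousOn_iff.1 hu (min (δ / 2) (ε / 2))
    (lt_min (half_pos hδ) (half_pos hε))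
  refine ⟨ρ / 2, half_pos hρ, fun a b hab hsub hside => ⟨δ / 2, half_pos hδ, fun φ hc hd => ?_⟩⟩
  have haQ : a ∈ Q := hsub (left_mem_Icc.2 hab)
  have hclose : ∀ x ∈ Icc a b, dist (g x) (g a) < min (δ / 2) (ε / 2) := by
    intro x hx
    refine hρ' x (hsub hx) a haQ ?_
    refine lt_of_le_of_lt ((dist_pi_le_iff (half_pos hρ).le).2 fun i => ?_) (half_lt_self hρ)
    have h1 : a i ≤ x i := hx.1 i
    have h2 : x i ≤ b i := hx.2 i
    have := hside i
    rw [Real.dist_eq, abs_of_nonneg (by linarith)]; linarith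
  obtain ⟨ξ, c, x1, x2, x3, x4, x5⟩ := H (g a) (mem_image_of_mem g haQ)
  obtain ⟨γ, y1, y2, y3⟩ := box_cone a b _ _ ξ c x1 x2 x3 x4 x5 φ hc (fun x hx => by
    have i1 := hclose x hx.1
    have i2 := hd x hx
    have i3 := dist_triangle_left (f (φ x)) (g a) (g x)
    have i4 := min_le_left (δ / 2) (ε / 2)
    simp only [mem_preimage, mem_ball]; linarith)
  refine ⟨γ, y1, y2, fun x hx => ?_⟩
  have i1 := hclose x hx
  have i2 : dist (f (γ x)) (g a) < ε / 2 := y3 hx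
  have i3 := dist_triangle_right (g x) (f (γ x)) (g a)
  have i4 := min_le_right (δ / 2) (ε / 2)
  linarith

lemma box_ext (hcomp : IsCompressive f) (D : Finset ι) : ∀ (a b : ι → ℝ), a ≤ b →
    (∀ i, a i < b i → i ∈ D) → ContinuousOn g (Icc a b) →
    ∀ ε > 0, ExtE f g (Icc a b) (bd a b) ε := by
  induction D using Finset.strongInduction with
  | H D IH =>
  intro a₀ b₀ hab₀ hD₀ hg ε hε
  obtain ⟨ρ, hρ, H⟩ := small_box hcomp isCompact_Icc hg hε
  have main : ∀ N : ℕ, ∀ n : ι → ℕ, ∑ i, n i = N → ∀ a b : ι → ℝ, a ≤ b → Icc a b ⊆ Icc a₀ b₀ →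
      (∀ i, a i < b i → i ∈ D) → (∀ i, b i - a i ≤ 2 ^ (n i) * ρ) →
      ExtE f g (Icc a b) (bd a b) ε := by
    intro N
    induction N with
    | zero =>
      intro n hn a b hab hsub hD hs
      refine H a b hab hsub fun i => ?_
      have : n i = 0 := by
        have := (Finset.sum_eq_zero_iff.1 hn) i (Finset.mem_univ i); exact this
      simpa [this] using hs i
    | succ N ih =>
      intro n hn a b hab hsub hD hs
      obtain ⟨j, hj⟩ : ∃ j, n j ≠ 0 := by
        by_contra! h
        simp [h] at hn
      obtain ⟨k, hk⟩ := Nat.exists_eq_succ_of_ne_zero hj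
      set n' := Function.update n j k with hn'
      have hsum : ∑ i, n' i = N := by
        rw [← Finset.add_sum_erase _ _ (Finset.mem_univ j)] at hn ⊢
        have : ∑ i ∈ Finset.univ.erase j, n' i = ∑ i ∈ Finset.univ.erase j, n i :=
          Finset.sum_congr rfl fun i hi => by simp [hn', Finset.ne_of_mem_erase hi]
        rw [this]
        simp only [hn', Function.update_self]
        omega
      have hsj : b j - a j ≤ 2 * (2 ^ k * ρ) := by
        have := hs j; rw [hk, Nat.succ_eq_add_one, pow_succ] at this; linarith
      have hkpos : 0 < 2 ^ k * ρ := by positivity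
      rcases (hab j).eq_or_lt with e | e
      · refine ih n' hsum a b hab hsub hD fun i => ?_
        by_cases hij : i = j
        · subst hij; simp only [hn', Function.update_self]; linarith
        · simpa [hn', hij] using hs i
      · set m := (a j + b j) / 2 with hm
        have h1 : a j < m := by linarith
        have h2 : m < b j := by linarith
        have lea : a ≤ Function.update a j m := by
          rw [le_update_iff]; exact ⟨h1.le, fun _ _ => le_rfl⟩
        have leb : Function.update b j m ≤ b := by
          rw [update_le_iff]; exact ⟨h2.le, fun _ _ => le_rfl⟩
        have leF : Function.update a j m ≤ Function.update b j m := by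
          rw [update_le_update_iff]; exact ⟨le_rfl, fun i _ => hab i⟩
        refine box_cut a b j m h1 h2 ?_ ?_ ?_
        · refine IH (D.erase j) (Finset.erase_ssubset (hD j e)) _ _ leF ?_
            (hg.mono ((Icc_subset_Icc lea leb).trans hsub))
          intro i hi
          by_cases hij : i = j
          · subst hij; simp at hi
          · exact Finset.mem_erase.2 ⟨hij, hD i (by simpa [hij] using hi)⟩
        · refine ih n' hsum _ _ (lea.trans leF) ((Icc_subset_Icc le_rfl leb).trans hsub) ?_ ?_
          · intro i hi
            exact hD i (hi.trans_le (leb i))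
          · intro i
            by_cases hij : i = j
            · subst hij; simp only [hn', Function.update_self]; linarith
            · simpa [hn', hij] using hs i
        · refine ih n' hsum _ _ (leF.trans leb) ((Icc_subset_Icc lea le_rfl).trans hsub) ?_ ?_
          · intro i hi
            exact hD i ((lea i).trans_lt hi)
          · intro i
            by_cases hij : i = j
            · subst hij; simp only [hn', Function.update_self]; linarith
            · simpa [hn', hij] using hs i
  choose n hn using fun i => pow_unbounded_of_one_lt ((b₀ i - a₀ i) / ρ) (one_lt_two (α := ℝ))
  refine main _ n rfl a₀ b₀ hab₀ subset_rfl hD₀ fun i => ?_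
  have := hn i
  rw [div_lt_iff₀ hρ] at this
  exact this.le
end box

section simplex
variable {X Y E : Type*} [TopologicalSpace X] [MetricSpace Y]
    [NormedAddCommGroup E] [NormedSpace ℝ E]
    {f : X → Y} {g : E → Y}

lemma simplex_ext (hcomp : IsCompressive f) (s : Finset E) (hs : s.Nonempty)
    (hind : AffineIndependent ℝ ((↑) : s → E)) (hg : ContinuousOn g (convexHull ℝ (s : Set E)))
    {ε : ℝ} (hε : 0 < ε) :
    ExtE f g (convexHull ℝ (s : Set E)) {p | ∃ t ⊂ s, p ∈ convexHull ℝ (t : Set E)} ε := by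
  classical
  set n := s.card - 1 with hn
  have hcard : 0 < s.card := hs.card_pos
  obtain ⟨b⟩ := AffineBasis.exists_affineBasis_of_finiteDimensional (ι := s) (k := ℝ)
    (P := Fin n → ℝ) (by simp; omega)
  set T := convexHull ℝ (range b) with hT
  have hTc : IsCompact T := (finite_range b).isCompact_convexHull ℝ
  have hTi : interior T = {x | ∀ i, 0 < b.coord i x} := b.interior_convexHull
  have hTe : T = {x | ∀ i, 0 ≤ b.coord i x} := b.convexHull_eq_nonneg_coord
  have hQi : interior (Icc (0 : Fin n → ℝ) 1) = {x | ∀ i, 0 < x i ∧ x i < 1} := by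
    rw [← pi_univ_Icc, interior_pi_set finite_univ]
    ext x; simp [Set.mem_pi]
  obtain ⟨e, e1, e2, -⟩ := exists_homeomorph_image_eq (s := Icc (0 : Fin n → ℝ) 1) (t := T)
    (convex_Icc _ _) (by rw [hQi]; exact ⟨fun _ => 1 / 2, fun i => by norm_num⟩)
    (NormedSpace.isVonNBounded_of_isBounded _ isCompact_Icc.isBounded)
    (convex_convexHull ℝ _) ⟨_, b.centroid_mem_interior_convexHull⟩
    (NormedSpace.isVonNBounded_of_isBounded _ hTc.isBounded)
  rw [isClosed_Icc.closure_eq, hTc.isClosed.closure_eq] at e2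
  set τ : (Fin n → ℝ) → E := fun x => ∑ i : s, b.coord i x • (i : E) with hτ
  have hτc : Continuous τ := continuous_finset_sum _ fun i _ =>
    (continuous_barycentric_coord b i).smul continuous_const
  have hτinj : Function.Injective τ := by
    intro x y hxy
    have h := (affineIndependent_iff.1 hind) Finset.univ (fun i => b.coord i x - b.coord i y)
      (by rw [Finset.sum_sub_distrib, b.sum_coord_apply_eq_one, b.sum_coord_apply_eq_one, sub_self])
      (by simp only [sub_smul, Finset.sum_sub_distrib]; exact sub_eq_zero.2 hxy)
    refine b.ext_elem fun i => ?_
    exact sub_eq_zero.1 (h i (Finset.mem_univ i))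
  have hpt : ∀ w : s → ℝ, ∑ i, w i = 1 → ∃ x, ∀ i, b.coord i x = w i := by
    intro w hw
    exact ⟨Finset.univ.affineCombination ℝ b w, fun i =>
      b.coord_apply_combination_of_mem (Finset.mem_univ i) hw⟩
  have himT : τ '' T = convexHull ℝ (s : Set E) := by
    ext p
    rw [Finset.mem_convexHull']
    constructor
    · rintro ⟨x, hx, rfl⟩
      rw [hTe] at hx
      refine ⟨fun y => if h : y ∈ s then b.coord ⟨y, h⟩ x else 0, ?_, ?_, ?_⟩
      · intro y hy; simp only [hy, dif_pos]; exact hx _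
      · rw [← Finset.sum_coe_sort]; simpa [-AffineBasis.sum_coord_apply_eq_one] using b.sum_coord_apply_eq_one x
      · rw [← Finset.sum_coe_sort]; simp [hτ]
    · rintro ⟨w, w0, w1, rfl⟩
      obtain ⟨x, hx⟩ := hpt (fun i => w i) ((Finset.sum_coe_sort s w).trans w1)
      refine ⟨x, ?_, ?_⟩
      · rw [hTe]; intro i; rw [hx]; exact w0 i i.2
      · simp only [hτ, hx]; exact Finset.sum_coe_sort s (fun y => w y • y)
  have hbdT : τ '' (T \ interior T) = {p | ∃ t ⊂ s, p ∈ convexHull ℝ (t : Set E)} := by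
    ext p
    constructor
    · rintro ⟨x, ⟨hx, hx2⟩, rfl⟩
      rw [hTe] at hx
      rw [hTi] at hx2
      simp only [mem_ofPred_eq, not_forall, not_lt] at hx2
      obtain ⟨j, hj⟩ := hx2
      have hj0 : b.coord j x = 0 := le_antisymm hj (hx j)
      refine ⟨s.erase j, Finset.erase_ssubset j.2, ?_⟩
      rw [Finset.mem_convexHull']
      refine ⟨fun y => if h : y ∈ s then b.coord ⟨y, h⟩ x else 0, ?_, ?_, ?_⟩
      · intro y hy; simp only [Finset.mem_of_mem_erase hy, dif_pos]; exact hx _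
      · rw [Finset.sum_erase _ (by simp [hj0]), ← Finset.sum_coe_sort]
        simpa [-AffineBasis.sum_coord_apply_eq_one] using b.sum_coord_apply_eq_one x
      · rw [Finset.sum_erase _ (by simp [hj0]), ← Finset.sum_coe_sort]; simp [hτ]
    · rintro ⟨t, ht, hp⟩
      obtain ⟨j, hjs, hjt⟩ := Finset.exists_of_ssubset ht
      rw [Finset.mem_convexHull'] at hp
      obtain ⟨w, w0, w1, rfl⟩ := hp
      set w' : E → ℝ := fun y => if y ∈ t then w y else 0 with hw'
      have hw's : ∑ y ∈ s, w' y = 1 := by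
        rw [← w1, ← Finset.sum_subset ht.1 (fun y _ hy => by simp [hw', hy])]
        exact Finset.sum_congr rfl fun y hy => by simp [hw', hy]
      have hw'p : ∑ y ∈ s, w' y • y = ∑ y ∈ t, w y • y := by
        rw [← Finset.sum_subset ht.1 (fun y _ hy => by simp [hw', hy])]
        exact Finset.sum_congr rfl fun y hy => by simp [hw', hy]
      obtain ⟨x, hx⟩ := hpt (fun i => w' i) ((Finset.sum_coe_sort s w').trans hw's)
      refine ⟨x, ⟨?_, ?_⟩, ?_⟩
      · rw [hTe]; intro i; rw [hx]
        simp only [hw']; split_ifs with h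
        · exact w0 _ h
        · exact le_rfl
      · rw [hTi]; intro h
        have := h ⟨j, hjs⟩
        rw [hx] at this
        simp [hw', hjt] at this
      · simp only [hτ, hx]; rw [← hw'p]; exact Finset.sum_coe_sort s (fun y => w' y • y)
  have hbd : bd (0 : Fin n → ℝ) 1 = Icc 0 1 \ interior (Icc 0 1) := by
    rw [hQi]
    ext x
    simp only [bd, mem_ofPred_eq, Set.mem_diff]
    refine and_congr_right fun hx => ?_
    constructor
    · rintro ⟨i, -, h⟩ h'
      have := h' i
      rcases h with h | h <;> rw [h] at this <;> simp at this
    · intro h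
      simp only [not_forall] at h
      obtain ⟨i, hi⟩ := h
      refine ⟨i, by simp, ?_⟩
      by_contra! hcon
      exact hi ⟨lt_of_le_of_ne (hx.1 i) hcon.1.symm, lt_of_le_of_ne (hx.2 i) hcon.2⟩
  have hall : ContinuousOn (g ∘ (τ ∘ e)) (Icc 0 1) :=
    hg.comp (hτc.comp e.continuous).continuousOn (by
      rw [← himT, ← e2, ← image_comp]; exact mapsTo_image _ _)
  refine ExtE.transfer (Q' := Icc 0 1) (A' := bd 0 1) (τ ∘ e) isCompact_Icc
    (hτc.comp e.continuous).continuousOn (hτinj.comp e.injective).injOn ?_ (bd_sub _ _) ?_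
    (box_ext hcomp Finset.univ 0 1 zero_le_one (fun i _ => Finset.mem_univ i) hall ε hε)
  · rw [image_comp, e2, himT]
  · rw [image_comp, hbd, image_diff e.injective, e2, e1, hbdT]

lemma complex_ext (hcomp : IsCompressive f) (K : Geometry.SimplicialComplex ℝ E)
    (hK : K.faces.Finite) (hg : ContinuousOn g K.space) :
    ∀ (N : ℕ) (F : Set (Finset E)), F ⊆ K.faces →
      (∀ s ∈ F, ∀ t ⊆ s, t.Nonempty → t ∈ F) → (K.faces \ F).ncard = N → ∀ ε > 0,
      ExtE f g K.space (⋃ s ∈ F, convexHull ℝ (s : Set E)) ε := by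
  intro N
  induction N with
  | zero =>
    intro F hF hdown hN ε hε
    have : K.faces ⊆ F := by
      rw [Set.ncard_eq_zero (hK.subset diff_subset)] at hN
      exact diff_eq_empty.1 hN
    rw [hF.antisymm this]
    exact ExtE.refl _ hε
  | succ N ih =>
    intro F hF hdown hN ε hε
    have hne : (K.faces \ F).Nonempty := by
      rw [nonempty_iff_ne_empty]; rintro h; simp [h] at hN
    obtain ⟨s, hs, hmin⟩ := Set.exists_min_image (K.faces \ F) Finset.card
      (hK.subset diff_subset) hne
    have hlt : ∀ t ⊂ s, t.Nonempty → t ∈ F := by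
      intro t ht htn
      by_contra h
      have := hmin t ⟨K.down_closed hs.1 ht.1 htn, h⟩
      exact absurd (Finset.card_lt_card ht) (not_lt.2 this)
    have h1 := ih (insert s F) (insert_subset hs.1 hF) (by
      rintro u (rfl | hu) t htu htn
      · rcases eq_or_ne t u with e | e
        · exact Or.inl e
        · exact Or.inr (hlt t (htu.ssubset_of_ne e) htn)
      · exact Or.inr (hdown u hu t htu htn)) (by
      have e : K.faces \ insert s F = (K.faces \ F) \ {s} := by
        ext t; simp only [mem_diff, mem_insert_iff, mem_singleton_iff]; tauto
      rw [e, Set.ncard_diff_singleton_of_mem hs, hN]; rfl) ε hε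
    refine h1.trans (fun ε' hε' => ?_) (biUnion_subset_biUnion_left (subset_insert _ _))
    rw [biUnion_insert, union_comm]
    refine (simplex_ext hcomp s (K.nonempty_of_mem_faces hs.1) (K.indep hs.1)
      (hg.mono (K.convexHull_subset_space hs.1)) hε').adj hε' ?_
      (s.finite_toSet.isClosed_convexHull ℝ) ?_
    · exact (hK.subset hF).isClosed_biUnion fun t _ => t.finite_toSet.isClosed_convexHull ℝ
    · classical
      ext p
      simp only [mem_inter_iff, mem_iUnion, mem_ofPred_eq, exists_prop]
      constructor
      · rintro ⟨⟨t, ht, hpt⟩, hps⟩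
        refine ⟨s ∩ t, ?_, ?_⟩
        · refine Finset.inter_subset_left.ssubset_of_ne fun e => hs.2 ?_
          exact hdown t ht s (Finset.inter_eq_left.1 e) (K.nonempty_of_mem_faces hs.1)
        · rw [Finset.coe_inter]
          exact K.inter_subset_convexHull hs.1 (hF ht) ⟨hps, hpt⟩
      · rintro ⟨t, ht, hpt⟩
        have htn : t.Nonempty := by
          rw [← Finset.coe_nonempty, ← convexHull_nonempty_iff (𝕜 := ℝ)]; exact ⟨p, hpt⟩
        exact ⟨⟨t, hlt t ht htn, hpt⟩, convexHull_mono (Finset.coe_subset.2 ht.1) hpt⟩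
end simplex

/-- **Proposition 2.3 (lifting).** Let `f : X → Y` be a compressive continuous
surjection onto a metric space, `K` a finite geometric simplicial complex in a
finite-dimensional real vector space `E`, `J` a subcomplex of `K`, `g : |K| → Y`
continuous, `η : |J| → X` continuous with `f ∘ η = g` on `|J|`, and `W` a
neighborhood of the diagonal of `Y × Y`.  Then `η` extends to a continuous
`γ : |K| → X` with `(g p, f (γ p)) ∈ W` for all `p ∈ |K|`. -/
theorem stmt_10 {X Y : Type*} [TopologicalSpace X] [MetricSpace Y]
    {E : Type*} [NormedAddCommGroup E] [NormedSpace ℝ E] [FiniteDimensional ℝ E]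
    (f : X → Y) (hfc : Continuous f) (hfs : Function.Surjective f)
    (hcomp : IsCompressive f)
    (K J : Geometry.SimplicialComplex ℝ E)
    (hKfin : K.faces.Finite) (hJK : J.faces ⊆ K.faces)
    (g : E → Y) (hg : ContinuousOn g K.space)
    (η : E → X) (hη : ContinuousOn η J.space)
    (hfη : ∀ p ∈ J.space, f (η p) = g p)
    (W : Set (Y × Y)) (hW : W ∈ nhdsSet (Set.diagonal Y)) :
    ∃ γ : E → X, ContinuousOn γ K.space ∧ (∀ p ∈ J.space, γ p = η p) ∧
      ∀ p ∈ K.space, (g p, f (γ p)) ∈ W := by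
  obtain ⟨O, hO, hdO, hOW⟩ := mem_nhdsSet_iff_exists.1 hW |>.imp fun _ h => h
  have hKc : IsCompact K.space := hKfin.isCompact_biUnion fun s _ =>
    s.finite_toSet.isCompact_convexHull ℝ
  have hC : IsCompact ((fun p => (g p, g p)) '' K.space) :=
    hKc.image_of_continuousOn (hg.prodMk hg)
  obtain ⟨ε, hε, hthick⟩ := hC.exists_thickening_subset_open hO (by
    rintro _ ⟨p, -, rfl⟩; exact hdO rfl)
  obtain ⟨δ, hδ, H⟩ := complex_ext (g := g) hcomp K hKfin hg _ J.faces hJK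
    (fun s hs t hts htn => J.down_closed hs hts htn) rfl ε hε
  obtain ⟨γ, h1, h2, h3⟩ := H η hη (fun p hp => by rw [hfη p hp, dist_self]; exact hδ)
  refine ⟨γ, h1, fun p hp => h2 hp, fun p hp => hOW (hthick ?_)⟩
  refine mem_thickening_iff.2 ⟨(g p, g p), mem_image_of_mem _ hp, ?_⟩
  rw [Prod.dist_eq, max_lt_iff]
  exact ⟨by simpa using hε, by rw [dist_comm]; exact h3 p hp⟩
end

section
/- Let X and Y be compact connected metric absolute neighborhood retracts, with X simply connected, and let f : X → Y be a continuous surjection such that for each y ∈ Y the fiber f⁻¹(y) is contractible. Then f is a homotopy equivalence. -/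
universe u

open Topology Set

universe w

namespace CL

/-- concrete neighborhood retract of the Hilbert cube -/
def NR (X : Type*) [TopologicalSpace X] : Prop :=
  ∃ (e : X → ℕ → ℝ) (U : Set (ℕ → ℝ)) (r : (ℕ → ℝ) → X), Continuous e ∧ IsOpen U ∧
    (∀ x, e x ∈ U) ∧ ContinuousOn r U ∧ (∀ x, r (e x) = x) ∧ ∀ x n, e x n ∈ Icc (0:ℝ) 1

theorem nr_of_anr {X : Type u} [MetricSpace X] [CompactSpace X] [Nonempty X] (h : IsANR X) :
    NR X := by
  obtain ⟨F, hF⟩ := Metric.PiNatEmbed.exists_embedding_to_hilbert_cube (X := X)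
  let e : X → ℕ → ℝ := fun x n => F x n
  have hec : Continuous e := by
    have := hF.continuous
    fun_prop
  have hei : Function.Injective e := by
    intro x y hxy
    apply hF.injective
    funext n
    exact Subtype.ext (congrFun hxy n)
  have : TopologicalSpace.MetrizableSpace (ULift.{u} (ℕ → ℝ)) :=
    Homeomorph.ulift.isEmbedding.metrizableSpace
  let _ : MetricSpace (ULift.{u} (ℕ → ℝ)) := TopologicalSpace.metrizableSpaceMetric _
  let e' : X → ULift.{u} (ℕ → ℝ) := fun x => ULift.up (e x)
  have he'c : Continuous e' := continuous_uliftUp.comp hec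
  have he'i : Function.Injective e' := fun x y hxy => hei (congrArg ULift.down hxy)
  have hce : IsClosedEmbedding e' := he'c.isClosedEmbedding he'i
  obtain ⟨U, r, hU, hsub, hr, hmem, hfix⟩ := h _ e' hce.isEmbedding hce.isClosed_range
  let inv : ULift.{u} (ℕ → ℝ) → X := Function.invFun e'
  have hinv : ∀ x, inv (e' x) = x := Function.leftInverse_invFun he'i
  refine ⟨e, ULift.up ⁻¹' U, fun z => inv (r (ULift.up z)), hec, hU.preimage continuous_uliftUp,
    fun x => hsub ⟨x, rfl⟩, ?_, ?_, fun x n => (F x n).2⟩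
  · have h1 : ContinuousOn (fun z : ℕ → ℝ => r (ULift.up z)) (ULift.up ⁻¹' U) :=
      hr.comp continuous_uliftUp.continuousOn (fun _ h => h)
    intro z hz
    rw [ContinuousWithinAt, hce.isInducing.tendsto_nhds_iff]
    have h2 : ∀ z ∈ U, e' (inv (r z)) = r z := by
      intro z hz
      obtain ⟨x, hx⟩ := hmem z hz
      rw [← hx, hinv]
    have h3 : ContinuousOn (fun z : ℕ → ℝ => e' (inv (r (ULift.up z)))) (ULift.up ⁻¹' U) :=
      h1.congr (fun z hz => h2 _ hz)
    exact h3 z hz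
  · intro x
    show inv (r (e' x)) = x
    rw [hfix _ ⟨x, rfl⟩, hinv]

theorem ane {X : Type*} [TopologicalSpace X] (hX : NR X) {T : Type*} [TopologicalSpace T]
    [NormalSpace T] {A : Set T} (hA : IsClosed A) {ψ : T → X} (hψ : ContinuousOn ψ A) :
    ∃ (W : Set T) (ψ' : T → X), IsOpen W ∧ A ⊆ W ∧ ContinuousOn ψ' W ∧ EqOn ψ' ψ A := by
  obtain ⟨e, U, r, he, hU, heU, hr, hre, -⟩ := hX
  obtain ⟨G, hG⟩ := ContinuousMap.exists_restrict_eq hA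
    (⟨fun a => e (ψ a), he.comp hψ.domRestrict⟩ : C(A, ℕ → ℝ))
  have hG' : ∀ a ∈ A, G a = e (ψ a) := fun a ha => DFunLike.congr_fun hG ⟨a, ha⟩
  refine ⟨G ⁻¹' U, fun t => r (G t), hU.preimage G.continuous, ?_, ?_, ?_⟩
  · intro a ha
    show G a ∈ U
    rw [hG' a ha]; exact heU _
  · exact hr.comp G.continuous.continuousOn (fun _ h => h)
  · intro a ha
    show r (G a) = _
    rw [hG' a ha, hre]

theorem ext_of_contr {X : Type*} [TopologicalSpace X] (hX : NR X) {V U : Set X} (hV : IsOpen V)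
    {h : X × unitInterval → X} (hh : ContinuousOn h (V ×ˢ univ)) {x0 : X} (hx0 : x0 ∈ U)
    (h0 : ∀ v ∈ V, h (v, 0) = v) (h1 : ∀ v ∈ V, h (v, 1) = x0) (hU : ∀ v ∈ V, ∀ t, h (v, t) ∈ U)
    {T : Type*} [TopologicalSpace T]
    [NormalSpace T] {A : Set T} (hA : IsClosed A) {ψ : T → X} (hψ : ContinuousOn ψ A)
    (hm : MapsTo ψ A V) : ∃ Ψ : T → X, Continuous Ψ ∧ EqOn Ψ ψ A ∧ ∀ t, Ψ t ∈ U := by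
  classical
  obtain ⟨W, ψ', hW, hAW, hψ', heq⟩ := ane hX hA hψ
  have hW' : IsOpen (W ∩ ψ' ⁻¹' V) := hψ'.isOpen_inter_preimage hW hV
  have hAW' : A ⊆ W ∩ ψ' ⁻¹' V := fun a ha => ⟨hAW ha, by
    show ψ' a ∈ V
    rw [heq ha]; exact hm ha⟩
  obtain ⟨W2, hW2, hAW2, hcl⟩ := normal_exists_closure_subset hA hW' hAW'
  obtain ⟨l, hl0, hl1, hl⟩ := exists_continuous_zero_one_of_isClosed hA hW2.isClosed_compl
    (disjoint_compl_right_iff_subset.2 hAW2)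
  let l' : T → unitInterval := fun t => ⟨l t, hl t⟩
  have hl' : Continuous l' := l.continuous.subtype_mk _
  let Ψ : T → X := fun t => if t ∈ W ∩ ψ' ⁻¹' V then h (ψ' t, l' t) else x0
  refine ⟨Ψ, ?_, ?_, ?_⟩
  · rw [continuous_iff_continuousAt]
    intro t
    by_cases ht : t ∈ W ∩ ψ' ⁻¹' V
    · have : ContinuousOn Ψ (W ∩ ψ' ⁻¹' V) := by
        have h2 : ContinuousOn (fun t => h (ψ' t, l' t)) (W ∩ ψ' ⁻¹' V) :=
          hh.comp ((hψ'.mono inter_subset_left).prodMk hl'.continuousOn)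
            (fun t ht => ⟨ht.2, mem_univ _⟩)
        exact h2.congr (fun t ht => if_pos ht)
      exact this.continuousAt (hW'.mem_nhds ht)
    · have ht2 : t ∈ (closure W2)ᶜ := fun h => ht (hcl h)
      have hev : Ψ =ᶠ[𝓝 t] fun _ => x0 := by
        filter_upwards [isClosed_closure.isOpen_compl.mem_nhds ht2] with s hs
        by_cases hs' : s ∈ W ∩ ψ' ⁻¹' V
        · have h3 : l' s = 1 := Subtype.ext (hl1 (fun h => hs (subset_closure h)))
          show (if _ then _ else _) = _
          rw [if_pos hs', h3, h1 _ hs'.2]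
        · exact if_neg hs'
      exact continuousAt_const.congr hev.symm
  · intro a ha
    have h3 : l' a = 0 := Subtype.ext (hl0 ha)
    show (if _ then _ else _) = _
    rw [if_pos (hAW' ha), h3, h0 _ (hAW' ha).2, heq ha]
  · intro t
    show (if _ then _ else _) ∈ U
    split_ifs with ht
    · exact hU _ ht.2 _
    · exact hx0

theorem dominated {X : Type*} [TopologicalSpace X] [CompactSpace X] (hX : NR X) :
    ∃ (n : ℕ) (T : Set (Fin n → ℝ)) (u : C(X, T)) (d : C(T, X)), IsCompact T ∧
      (∀ t ∈ T, ∀ i, t i ∈ Icc (0:ℝ) 1) ∧ (d.comp u).Homotopic (ContinuousMap.id X) := by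
  obtain ⟨e, U, r, he, hU, heU, hr, hre, hI⟩ := hX
  have hev : ∀ᶠ m in 𝓝 (fun _ => 1 : ℕ → ℝ), ∀ x ∈ (univ : Set X),
      (fun i => m i * e x i) ∈ U := by
    apply isCompact_univ.eventually_forall_of_forall_eventually
    intro x _
    have hc : Continuous (fun z : X × (ℕ → ℝ) => fun i => z.2 i * e z.1 i) := by fun_prop
    have := hc.continuousAt (x := (x, fun _ => 1))
    first
    | exact this.eventually_mem (hU.mem_nhds (by simpa using heU x))
    | (have hc : Continuous (fun z : (ℕ → ℝ) × X => fun i => z.1 i * e z.2 i) := by fun_prop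
       have := hc.continuousAt (x := (fun _ => 1, x))
       exact this.eventually_mem (hU.mem_nhds (by simpa using heU x)))
  obtain ⟨M, hM, hMo, h1M⟩ := eventually_nhds_iff.1 hev
  obtain ⟨I, v, hv, hIM⟩ := isOpen_pi_iff.1 hMo _ h1M
  obtain ⟨n, hn⟩ := I.exists_nat_subset_range
  have key : ∀ m : ℕ → ℝ, (∀ i < n, m i = 1) → ∀ x, (fun i => m i * e x i) ∈ U := by
    intro m hm x
    refine hM m (hIM ?_) x trivial
    intro i hi
    rw [hm i (Finset.mem_range.1 (hn hi))]
    exact (hv i hi).2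
  let q : X → Fin n → ℝ := fun x i => e x i
  have hq : Continuous q := by fun_prop
  let E : (Fin n → ℝ) → ℕ → ℝ := fun t i => if h : i < n then t ⟨i, h⟩ else 0
  have hE : Continuous E := by
    refine continuous_pi fun i => ?_
    by_cases h : i < n
    · simp only [E, h, dif_pos]; fun_prop
    · simp only [E, h, dif_neg, not_false_eq_true]; fun_prop
  have hEq : ∀ x, E (q x) = fun i => (if i < n then 1 else 0) * e x i := by
    intro x; funext i
    by_cases h : i < n <;> simp [E, q, h]
  have hEU : ∀ t ∈ range q, E t ∈ U := by
    rintro _ ⟨x, rfl⟩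
    rw [hEq]
    exact key (fun i => if i < n then 1 else 0) (fun i hi => if_pos hi) x
  refine ⟨n, range q, ⟨fun x => ⟨q x, x, rfl⟩, hq.subtype_mk _⟩,
    ⟨fun t => r (E t), ?_⟩, isCompact_range hq, ?_, ?_⟩
  · exact hr.comp_continuous (hE.comp continuous_subtype_val) (fun t => hEU _ t.2)
  · rintro _ ⟨x, rfl⟩ i
    exact hI x i
  · refine ⟨⟨⟨fun z => r (fun i => (if i < n then 1 else (z.1 : ℝ)) * e z.2 i), ?_⟩, ?_, ?_⟩⟩
    · refine hr.comp_continuous ?_ (fun z => key _ (fun i hi => if_pos hi) _)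
      refine continuous_pi fun i => ?_
      by_cases h : i < n
      · simp only [h, if_true]; fun_prop
      · simp only [h, if_false]; fun_prop
    · intro x
      show r _ = r (E (q x))
      rw [hEq]; rfl
    · intro x
      show r _ = x
      conv_rhs => rw [← hre x]
      congr 1; funext i; simp

theorem close_homotopic {Y : Type*} [MetricSpace Y] [CompactSpace Y] (hY : NR Y) :
    ∃ ε > 0, ∀ {T : Type w} [TopologicalSpace T] (a b : C(T, Y)), (∀ t, dist (a t) (b t) < ε) →
      a.Homotopic b := by
  obtain ⟨e, U, r, he, hU, heU, hr, hre, -⟩ := hY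
  let ℓ : (Y × Y) → ℝ → ℕ → ℝ := fun p s i => (1 - s) * e p.1 i + s * e p.2 i
  have hO : {p : Y × Y | ∀ s ∈ Icc (0:ℝ) 1, ℓ p s ∈ U} ∈ uniformity Y := by
    rw [compactSpace_uniformity, Filter.mem_iSup]
    intro y
    show ∀ᶠ p in 𝓝 (y, y), ∀ s ∈ Icc (0:ℝ) 1, ℓ p s ∈ U
    apply isCompact_Icc.eventually_forall_of_forall_eventually
    intro s _
    have hyy : ℓ (y, y) s = e y := by funext i; simp only [ℓ]; ring
    have hc : Continuous (fun z : (Y × Y) × ℝ => ℓ z.1 z.2) := by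
      refine continuous_pi fun i => ?_
      simp only [ℓ]; fun_prop
    have := hc.continuousAt (x := ((y, y), s))
    exact this.eventually_mem (hU.mem_nhds (by simpa [hyy] using heU y))
  obtain ⟨ε, hε, hsub⟩ := Metric.mem_uniformity_dist.1 hO
  refine ⟨ε, hε, fun {T} _ a b hab => ?_⟩
  refine ⟨⟨⟨fun z => r (ℓ (a z.2, b z.2) z.1), ?_⟩, ?_, ?_⟩⟩
  · refine hr.comp_continuous ?_ (fun z => hsub (hab z.2) _ z.1.2)
    refine continuous_pi fun i => ?_
    simp only [ℓ]; fun_prop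
  · intro t
    show r _ = _
    rw [← hre (a t)]
    congr 1; funext i; simp [ℓ, hre]
  · intro t
    show r _ = _
    rw [← hre (b t)]
    congr 1; funext i; simp [ℓ, hre]

theorem local_ext {X Y : Type*} [MetricSpace X] [CompactSpace X] [MetricSpace Y] (hX : NR X)
    {f : X → Y} (hf : Continuous f) (y : Y) [ContractibleSpace (f ⁻¹' {y})] {ε : ℝ} (hε : 0 < ε) :
    ∃ δ > 0, ∀ {T : Type w} [TopologicalSpace T] [NormalSpace T] (A : Set T) (ψ : T → X),
      IsClosed A → ContinuousOn ψ A → (∀ a ∈ A, f (ψ a) ∈ Metric.ball y δ) →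
      ∃ Ψ : T → X, Continuous Ψ ∧ EqOn Ψ ψ A ∧ ∀ t, f (Ψ t) ∈ Metric.ball y ε := by
  classical
  obtain ⟨p, ⟨H⟩⟩ := id_nullhomotopic (f ⁻¹' {y})
  have hFc : IsClosed (f ⁻¹' {y}) := isClosed_singleton.preimage hf
  let ψ0 : X × unitInterval → X := fun z =>
    if z.2 = 0 then z.1 else if z.2 = 1 then p else
      if h : z.1 ∈ f ⁻¹' {y} then H (z.2, ⟨z.1, h⟩) else p
  let A0 : Set (X × unitInterval) := {z | z.2 = 0}
  let A1 : Set (X × unitInterval) := {z | z.2 = 1}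
  let A2 : Set (X × unitInterval) := {z | z.1 ∈ f ⁻¹' {y}}
  have hA0 : IsClosed A0 := isClosed_singleton.preimage continuous_snd
  have hA1 : IsClosed A1 := isClosed_singleton.preimage continuous_snd
  have hA2 : IsClosed A2 := hFc.preimage continuous_fst
  have e0 : ∀ z ∈ A0, ψ0 z = z.1 := fun z hz => if_pos hz
  have e1 : ∀ z ∈ A1, ψ0 z = p := by
    intro z hz
    have hz' : z.2 = 1 := hz
    simp [ψ0, hz']
  have e2 : ∀ z (hz : z ∈ A2), ψ0 z = H (z.2, ⟨z.1, hz⟩) := by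
    rintro ⟨x, t⟩ hz
    have hz' : x ∈ f ⁻¹' {y} := hz
    by_cases h0 : t = 0
    · subst h0; simp [ψ0]
    by_cases h1 : t = 1
    · subst h1; simp [ψ0]
    · simp only [ψ0, h0, h1, if_false]
      rw [dif_pos hz']
  have c0 : ContinuousOn ψ0 A0 := continuous_fst.continuousOn.congr e0
  have c1 : ContinuousOn ψ0 A1 := continuousOn_const.congr e1
  have c2 : ContinuousOn ψ0 A2 := by
    rw [continuousOn_iff_continuous_domRestrict]
    have : A2.domRestrict ψ0 = fun z => ((H (z.1.2, ⟨z.1.1, z.2⟩) : f ⁻¹' {y}) : X) := by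
      funext z; exact e2 z.1 z.2
    rw [this]
    fun_prop
  obtain ⟨W, h, hW, hAW, hh, heq⟩ := ane hX ((hA0.union hA1).union hA2)
    ((c0.union_of_isClosed c1 hA0 hA1).union_of_isClosed c2 (hA0.union hA1) hA2)
  have hW' : IsOpen (W ∩ (fun z => f (h z)) ⁻¹' Metric.ball y ε) :=
    (hf.comp_continuousOn hh).isOpen_inter_preimage hW Metric.isOpen_ball
  have hsub : (f ⁻¹' {y}) ×ˢ (univ : Set unitInterval) ⊆
      W ∩ (fun z => f (h z)) ⁻¹' Metric.ball y ε := by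
    rintro z ⟨hz, -⟩
    have hz2 : z ∈ A2 := hz
    refine ⟨hAW (Or.inr hz2), ?_⟩
    show f (h z) ∈ Metric.ball y ε
    rw [heq (Or.inr hz2), e2 z hz2]
    have : f (H (z.2, ⟨z.1, hz2⟩) : f ⁻¹' {y}) = y := (H (z.2, ⟨z.1, hz2⟩)).2
    rw [this]
    exact Metric.mem_ball_self hε
  obtain ⟨V, v, hV, -, hFV, huv, hVW⟩ := generalized_tube_lemma hFc.isCompact isCompact_univ hW' hsub
  have hcl : IsClosed (f '' Vᶜ) := (hV.isClosed_compl.isCompact.image hf).isClosed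
  have hy : y ∈ (f '' Vᶜ)ᶜ := by
    rintro ⟨x, hx, hxy⟩
    exact hx (hFV hxy)
  obtain ⟨δ, hδ, hball⟩ := Metric.isOpen_iff.1 hcl.isOpen_compl y hy
  have hpre : ∀ x, f x ∈ Metric.ball y δ → x ∈ V := by
    intro x hx
    by_contra hxV
    exact hball hx ⟨x, hxV, rfl⟩
  have hVW' : ∀ x ∈ V, ∀ t, (x, t) ∈ W ∩ (fun z => f (h z)) ⁻¹' Metric.ball y ε :=
    fun x hx t => hVW ⟨hx, huv trivial⟩
  refine ⟨δ, hδ, fun {T} _ _ A ψ hA hψ hm => ?_⟩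
  refine ext_of_contr hX (U := f ⁻¹' Metric.ball y ε) hV (h := h) (x0 := p) ?_ ?_ ?_ ?_ ?_ hA hψ
    (fun a ha => hpre _ (hm a ha))
  · exact hh.mono (fun z hz => (hVW' z.1 hz.1 z.2).1)
  · have : f p = y := p.2
    show f p ∈ Metric.ball y ε
    rw [this]
    exact Metric.mem_ball_self hε
  · intro v _
    rw [heq (Or.inl (Or.inl rfl)), e0 _ rfl]
  · intro v _
    rw [heq (Or.inl (Or.inr rfl)), e1 _ rfl]
  · intro v hv t
    exact (hVW' v hv t).2

/-- uniform extension property -/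
def UE {X Y : Type*} [MetricSpace X] [MetricSpace Y] (f : X → Y) (T : Type*)
    [TopologicalSpace T] : Prop :=
  ∀ ε > 0, ∃ δ > 0, ∀ (y : Y) (A : Set T) (ψ : T → X),
      IsClosed A → ContinuousOn ψ A → (∀ a ∈ A, f (ψ a) ∈ Metric.ball y δ) →
      ∃ Ψ : T → X, Continuous Ψ ∧ EqOn Ψ ψ A ∧ ∀ t, f (Ψ t) ∈ Metric.ball y ε

theorem unif_ext {X Y : Type*} [MetricSpace X] [CompactSpace X] [MetricSpace Y] [CompactSpace Y]
    (hX : NR X) {f : X → Y} (hf : Continuous f) (hfib : ∀ y, ContractibleSpace (f ⁻¹' {y}))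
    (T : Type*) [TopologicalSpace T] [NormalSpace T] : UE f T := by
  intro ε hε
  have hloc := fun y => local_ext hX hf y (half_pos hε)
  choose d hd hext using hloc
  obtain ⟨δ, hδ, hleb⟩ := lebesgue_number_lemma_of_metric (s := (univ : Set Y))
    (c := fun y => Metric.ball y (min (d y) (ε / 2))) isCompact_univ
    (fun y => Metric.isOpen_ball)
    (fun y _ => mem_iUnion.2 ⟨y, Metric.mem_ball_self (lt_min (hd y) (half_pos hε))⟩)
  refine ⟨δ, hδ, fun y A ψ hA hψ hm => ?_⟩
  obtain ⟨y', hy'⟩ := hleb y trivial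
  obtain ⟨Ψ, h1, h2, h3⟩ := hext y' A ψ hA hψ
    (fun a ha => Metric.ball_subset_ball (min_le_left _ _) (hy' (hm a ha)))
  refine ⟨Ψ, h1, h2, fun t => ?_⟩
  have h4 := h3 t
  have h5 := Metric.ball_subset_ball (min_le_right _ _) (hy' (Metric.mem_ball_self hδ))
  rw [Metric.mem_ball] at *
  have := dist_triangle_right (f (Ψ t)) y y'
  linarith

theorem lift_aux {X Y T C : Type*} [MetricSpace X] [MetricSpace Y] [TopologicalSpace T]
    {f : X → Y} (hf : UE f T) {φ : T → Y} {L : Set T} (hL : IsClosed L)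
    {ψ0 : T → X} (hψ0 : ContinuousOn ψ0 L) (hφ0 : ∀ t ∈ L, f (ψ0 t) = φ t) (S : Finset C) :
    ∀ ε > 0, ∃ η > 0, ∀ {ι : Type w} [Finite ι] (c : C → ι → Set T),
      (∀ a i, IsClosed (c a i)) → (∀ a i j, i ≠ j → Disjoint (c a i) (c a j)) →
      (∀ a i, ∀ x ∈ c a i, ∀ y ∈ c a i, dist (φ x) (φ y) < η) →
      ∃ ψ : T → X, ContinuousOn ψ (L ∪ ⋃ a ∈ S, ⋃ i, c a i) ∧ EqOn ψ ψ0 L ∧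
        ∀ t ∈ (L ∪ ⋃ a ∈ S, ⋃ i, c a i), dist (f (ψ t)) (φ t) < ε := by
  classical
  induction S using Finset.induction_on with
  | empty =>
    intro ε hε
    refine ⟨1, one_pos, fun {ι} _ c _ _ _ => ⟨ψ0, by simpa using hψ0, fun _ _ => rfl, ?_⟩⟩
    intro t ht
    have ht' : t ∈ L := by simpa using ht
    rw [hφ0 t ht', dist_self]; exact hε
  | insert a S ha ih =>
    intro ε hε
    obtain ⟨δ, hδ, hδe⟩ := hf (ε / 2) (half_pos hε)
    obtain ⟨η, hη, hηe⟩ := ih (min (δ / 2) ε) (lt_min (half_pos hδ) hε)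
    refine ⟨min η (min (δ / 2) (ε / 2)), lt_min hη (lt_min (half_pos hδ) (half_pos hε)),
      fun {ι} _ c hcl hdisj hosc => ?_⟩
    obtain ⟨ψ, hψ, hψL, hψd⟩ := hηe c hcl hdisj
      (fun a i x hx y hy => (hosc a i x hx y hy).trans_le (min_le_left _ _))
    set B : Set T := L ∪ ⋃ a ∈ S, ⋃ i, c a i with hB
    have hBc : IsClosed B := by
      refine hL.union (isClosed_biUnion_finset fun a _ => isClosed_iUnion_of_finite (hcl a))
    have hpiece : ∀ i, ∃ Ψ : T → X, ContinuousOn Ψ (c a i) ∧ EqOn Ψ ψ (B ∩ c a i) ∧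
        ∀ t ∈ c a i, dist (f (Ψ t)) (φ t) < ε := by
      intro i
      rcases (c a i).eq_empty_or_nonempty with h | ⟨x, hx⟩
      · exact ⟨ψ, by simp [h], fun _ _ => rfl, by simp [h]⟩
      · obtain ⟨Ψ, h1, h2, h3⟩ := hδe (φ x) (B ∩ c a i) ψ (hBc.inter (hcl a i))
          (hψ.mono inter_subset_left) (by
            rintro t ⟨htB, htc⟩
            rw [Metric.mem_ball]
            have h4 := hψd t htB
            have h5 := hosc a i t htc x hx
            have h6 := dist_triangle (f (ψ t)) (φ t) (φ x)
            have h7 := h4.trans_le (min_le_left _ _)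
            have h8 := h5.trans_le ((min_le_right _ _).trans (min_le_left _ _))
            linarith)
        refine ⟨Ψ, h1.continuousOn, h2, fun t ht => ?_⟩
        have h4 := h3 t
        rw [Metric.mem_ball] at h4
        have h5 := hosc a i x hx t ht
        have h6 := dist_triangle (f (Ψ t)) (φ x) (φ t)
        have h8 := h5.trans_le ((min_le_right _ _).trans (min_le_right _ _))
        linarith
    choose Ψ hΨc hΨe hΨd using hpiece
    let N : T → X := fun t => if t ∈ B then ψ t else
      if h : ∃ i, t ∈ c a i then Ψ h.choose t else ψ t
    have hNB : ∀ t ∈ B, N t = ψ t := fun t ht => if_pos ht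
    have hNc : ∀ i, ∀ t ∈ c a i, N t = Ψ i t := by
      intro i t ht
      by_cases hB' : t ∈ B
      · rw [hNB t hB', hΨe i ⟨hB', ht⟩]
      · have hex : ∃ i, t ∈ c a i := ⟨i, ht⟩
        have hi : hex.choose = i := by
          by_contra hne
          exact (hdisj a _ _ hne).le_bot ⟨hex.choose_spec, ht⟩
        simp only [N, if_neg hB', dif_pos hex, hi]
    have hset : (L ∪ ⋃ b ∈ insert a S, ⋃ i, c b i) = B ∪ ⋃ i, c a i := by
      rw [Finset.set_biUnion_insert, hB, union_assoc, union_comm (⋃ i, c a i)]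
    rw [hset]
    refine ⟨N, ?_, ?_, ?_⟩
    · refine (hψ.congr hNB).union_of_isClosed ?_ hBc (isClosed_iUnion_of_finite (hcl a))
      exact (locallyFinite_of_finite _).continuousOn_iUnion (hcl a)
        (fun i => (hΨc i).congr (hNc i))
    · intro t ht
      rw [hNB t (Or.inl ht)]; exact hψL ht
    · rintro t (ht | ht)
      · rw [hNB t ht]; exact (hψd t ht).trans_le (min_le_right _ _)
      · obtain ⟨i, hi⟩ := mem_iUnion.1 ht
        rw [hNc i t hi]; exact hΨd i t hi

theorem lift {X Y T : Type*} [MetricSpace X] [MetricSpace Y] [MetricSpace T] [CompactSpace T]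
    {κ : Type} [Fintype κ] {j : T → κ → ℝ} (hj : Continuous j)
    (hjI : ∀ t i, j t i ∈ Icc (0:ℝ) 1) (hjd : ∀ s t, dist s t ≤ dist (j s) (j t))
    {f : X → Y} (hf : UE f T) {φ : T → Y} (hφ : Continuous φ) {L : Set T} (hL : IsClosed L)
    {ψ0 : T → X} (hψ0 : ContinuousOn ψ0 L) (hφ0 : ∀ t ∈ L, f (ψ0 t) = φ t)
    {ε : ℝ} (hε : 0 < ε) :
    ∃ ψ : T → X, Continuous ψ ∧ EqOn ψ ψ0 L ∧ ∀ t, dist (f (ψ t)) (φ t) < ε := by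
  classical
  obtain ⟨η, hη, H⟩ := lift_aux hf hL hψ0 hφ0 (Finset.univ : Finset (κ → Fin 2)) ε hε
  obtain ⟨δ, hδ, hu⟩ := Metric.uniformContinuous_iff.1
    (CompactSpace.uniformContinuous_of_continuous hφ) η hη
  obtain ⟨N, hN⟩ := exists_nat_gt (1 / δ)
  have hN0 : (0:ℝ) < N := (one_div_pos.2 hδ).trans hN
  have hNδ : 1 / (N:ℝ) < δ := by
    rw [div_lt_iff₀ hN0]; rw [div_lt_iff₀ hδ] at hN; linarith
  let c : (κ → Fin 2) → (κ → Fin (N + 1)) → Set T := fun e b =>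
    {t | ∀ i, N * j t i ∈ Icc ((2 * (b i : ℕ) + (e i : ℕ) : ℕ) : ℝ)
      ((2 * (b i : ℕ) + (e i : ℕ) : ℕ) + 1 : ℝ)}
  have q1 : ∀ a i, IsClosed (c a i) := by
    intro a b
    simp only [c, setOf_forall]
    refine isClosed_iInter fun i => isClosed_Icc.preimage ?_
    fun_prop
  have q2 : ∀ a i j, i ≠ j → Disjoint (c a i) (c a j) := by
    intro a b b' hne
    rw [Set.disjoint_left]
    intro t ht ht'
    apply hne
    funext i
    have h1 := ht i
    have h2 := ht' i
    have h3 : 2 * (b i : ℕ) + (a i : ℕ) ≤ 2 * (b' i : ℕ) + (a i : ℕ) + 1 := by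
      exact_mod_cast h1.1.trans h2.2
    have h4 : 2 * (b' i : ℕ) + (a i : ℕ) ≤ 2 * (b i : ℕ) + (a i : ℕ) + 1 := by
      exact_mod_cast h2.1.trans h1.2
    apply Fin.ext
    omega
  have q3 : ∀ a i, ∀ x ∈ c a i, ∀ y ∈ c a i, dist (φ x) (φ y) < η := by
    intro a b x hx y hy
    apply hu
    refine (hjd x y).trans_lt (lt_of_le_of_lt ?_ hNδ)
    rw [dist_pi_le_iff (by positivity)]
    intro i
    have h1 := hx i
    have h2 := hy i
    rw [Real.dist_eq, le_div_iff₀ hN0]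
    have h3 : |j x i - j y i| * N = |N * j x i - N * j y i| := by
      rw [← mul_sub, abs_mul, abs_of_pos hN0, mul_comm]
    rw [h3, abs_le]
    have h4 := h1.1
    have h5 := h1.2
    have h6 := h2.1
    have h7 := h2.2
    constructor <;> linarith
  obtain ⟨ψ, h1, h2, h3⟩ := H c q1 q2 q3
  have huniv : (L ∪ ⋃ a ∈ (Finset.univ : Finset (κ → Fin 2)), ⋃ i, c a i) = univ := by
    rw [eq_univ_iff_forall]
    intro t
    right
    have hn0 : ∀ i, 0 ≤ N * j t i := fun i => mul_nonneg hN0.le (hjI t i).1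
    have hle : ∀ i, ⌊N * j t i⌋₊ ≤ N := by
      intro i
      apply Nat.floor_le_of_le
      have := (hjI t i).2
      nlinarith
    simp only [mem_iUnion]
    refine ⟨fun i => ⟨⌊N * j t i⌋₊ % 2, Nat.mod_lt _ two_pos⟩, Finset.mem_univ _,
      fun i => ⟨⌊N * j t i⌋₊ / 2, by have := hle i; omega⟩, fun i => ?_⟩
    simp only [Nat.div_add_mod]
    exact ⟨Nat.floor_le (hn0 i), (Nat.lt_floor_add_one _).le⟩
  rw [huniv] at h1 h3
  exact ⟨ψ, continuousOn_univ.1 h1, h2, fun t => h3 t trivial⟩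

end CL

theorem stmt_11 {X Y : Type*} [MetricSpace X] [MetricSpace Y]
    [CompactSpace X] [CompactSpace Y] [ConnectedSpace X] [ConnectedSpace Y]
    (hXanr : IsANR X) (hYanr : IsANR Y) [SimplyConnectedSpace X]
    (f : X → Y) (hfc : Continuous f) (hfs : Function.Surjective f)
    (hfib : ∀ y : Y, ContractibleSpace (f ⁻¹' {y})) :
    ∃ g : C(Y, X),
      ((⟨f, hfc⟩ : C(X, Y)).comp g).Homotopic (ContinuousMap.id Y) ∧
      (g.comp (⟨f, hfc⟩ : C(X, Y))).Homotopic (ContinuousMap.id X) := by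
  have hX : CL.NR X := CL.nr_of_anr hXanr
  have hY : CL.NR Y := CL.nr_of_anr hYanr
  set F : C(X, Y) := ⟨f, hfc⟩ with hF
  obtain ⟨n, T, u, d, hT, hTI, hdu⟩ := CL.dominated hY
  obtain ⟨m, S, v, k, hS, hSI, hkv⟩ := CL.dominated hX
  obtain ⟨ε, hε, hclose⟩ := CL.close_homotopic hY
  have : CompactSpace T := isCompact_iff_compactSpace.1 hT
  have : CompactSpace S := isCompact_iff_compactSpace.1 hS
  have x0 : X := Classical.arbitrary X
  obtain ⟨l, hl, -, hld⟩ := CL.lift (T := T) (j := fun t => t.1) continuous_subtype_val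
    (fun t i => hTI t t.2 i) (fun s t => le_rfl) (CL.unif_ext hX hfc hfib T) d.continuous
    (L := ∅) isClosed_empty (ψ0 := fun _ => x0) (by simp) (by simp) hε
  let l' : C(T, X) := ⟨l, hl⟩
  have hFl : (F.comp l').Homotopic d := hclose _ _ hld
  let g : C(Y, X) := l'.comp u
  have hFg : (F.comp g).Homotopic (ContinuousMap.id Y) :=
    (ContinuousMap.Homotopic.comp hFl (ContinuousMap.Homotopic.refl u)).trans hdu
  refine ⟨g, hFg, ?_⟩
  have hH : (F.comp (g.comp (F.comp k))).Homotopic (F.comp k) :=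
    show ((F.comp g).comp (F.comp k)).Homotopic ((ContinuousMap.id Y).comp (F.comp k)) from
      ContinuousMap.Homotopic.comp hFg (ContinuousMap.Homotopic.refl (F.comp k))
  obtain ⟨H⟩ := hH
  have hgk : (g.comp (F.comp k)).Homotopic k := by
    classical
    have hne : (1 : unitInterval) ≠ 0 := one_ne_zero
    have hL0 : IsClosed {z : unitInterval × S | z.1 = 0} :=
      isClosed_singleton.preimage continuous_fst
    have hL1 : IsClosed {z : unitInterval × S | z.1 = 1} :=
      isClosed_singleton.preimage continuous_fst
    let ψ0 : unitInterval × S → X := fun z => if z.1 = 0 then g (F (k z.2)) else k z.2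
    have e0 : ∀ z ∈ {z : unitInterval × S | z.1 = 0}, ψ0 z = g (F (k z.2)) :=
      fun z hz => if_pos hz
    have e1 : ∀ z ∈ {z : unitInterval × S | z.1 = 1}, ψ0 z = k z.2 := by
      intro z hz
      have hz' : z.1 = 1 := hz
      simp [ψ0, hz']
    obtain ⟨ψ, hψ, hψe, -⟩ := CL.lift (T := unitInterval × S) (κ := Option (Fin m))
      (j := fun z o => o.elim (z.1 : ℝ) (fun i => z.2.1 i))
      (by
        refine continuous_pi fun o => ?_
        rcases o with _ | i
        · exact continuous_subtype_val.comp continuous_fst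
        · exact (continuous_apply i).comp (continuous_subtype_val.comp continuous_snd))
      (by
        rintro z (_ | i)
        · exact z.1.2
        · exact hSI z.2 z.2.2 i)
      (by
        intro s t
        rw [Prod.dist_eq]
        refine max_le ?_ ?_
        · exact dist_le_pi_dist (fun o : Option (Fin m) => o.elim (s.1 : ℝ) (fun i => s.2.1 i))
            (fun o : Option (Fin m) => o.elim (t.1 : ℝ) (fun i => t.2.1 i)) none
        · rw [Subtype.dist_eq, dist_pi_le_iff dist_nonneg]
          intro i
          exact dist_le_pi_dist (fun o : Option (Fin m) => o.elim (s.1 : ℝ) (fun i => s.2.1 i))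
            (fun o : Option (Fin m) => o.elim (t.1 : ℝ) (fun i => t.2.1 i)) (some i))
      (CL.unif_ext hX hfc hfib _) (φ := H) H.continuous
      (L := {z | z.1 = 0} ∪ {z | z.1 = 1}) (hL0.union hL1) (ψ0 := ψ0)
      (ContinuousOn.union_of_isClosed
        (ContinuousOn.congr (by fun_prop) e0) (ContinuousOn.congr (by fun_prop) e1) hL0 hL1)
      (by
        rintro ⟨s, t⟩ (h | h)
        · rw [e0 _ h]
          have h' : s = 0 := h
          subst h'
          exact (H.apply_zero t).symm
        · rw [e1 _ h]
          have h' : s = 1 := h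
          subst h'
          exact (H.apply_one t).symm)
      hε
    refine ⟨⟨⟨ψ, hψ⟩, fun t => ?_, fun t => ?_⟩⟩
    · exact (hψe (Or.inl rfl)).trans (e0 (0, t) rfl)
    · exact (hψe (Or.inr rfl)).trans (e1 (1, t) rfl)
  have s1 : (g.comp F).Homotopic ((g.comp F).comp (k.comp v)) :=
    ContinuousMap.Homotopic.comp (ContinuousMap.Homotopic.refl (g.comp F)) hkv.symm
  have s2 : ((g.comp F).comp (k.comp v)).Homotopic (k.comp v) :=
    ContinuousMap.Homotopic.comp hgk (ContinuousMap.Homotopic.refl v)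
  exact (s1.trans s2).trans hkv
end
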